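/- arXiv:math/0112314 — 2 statements merged into one kernel-verified Lean document; each statement's English description precedes it below -/
import Mathlib

section
/- Let V be a 2-dimensional vector space over a field of characteristic zero. Then for all positive integers m, n there are isomorphisms of sl(V)-modules: S^n(S^m(V)) ≅ S^m(S^n(V)) (Hermite's reciprocity), and Λ^m(S^{n+m−1}(V)) ≅ S^m(S^n(V)). -/
/-!
STATEMENT 11: Let V be a 2-dimensional vector space over a field of
characteristic zero.  Then for all positive integers m, n there are
isomorphisms of sl(V)-modules
  S^n(S^m(V)) ≅ S^m(S^n(V))          (Hermite reciprocity), and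
  Λ^m(S^{n+m−1}(V)) ≅ S^m(S^n(V)).

Encoding: sl(V) is the space of traceless endomorphisms of V.  The symmetric
power S^j(W) of a space W with chosen basis is modelled as the space of
homogeneous polynomials of degree j in variables indexed by the basis of W,
with an endomorphism x of W acting by the derivation Σ M_{ij} X_i ∂_j
(M the matrix of x); `matSym` is the matrix of the induced action on S^j in
the monomial basis.  The exterior power Λ^m(W) is modelled on the free space
on m-element subsets of the basis of W, an endomorphism acting via `extMat`,
the derivative at the identity of the minor action of GL(W) on Λ^m(W).  An
isomorphism of sl(V)-modules is a linear equivalence commuting with the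
action of every traceless x; for the symmetric model, which lives inside the
full polynomial algebra, equivariance is stated through the ambient action.
-/

noncomputable section

namespace Herm

variable {k : Type} [Field k]

/-- The derivation action of a matrix M ∈ gl_N on polynomial functions:
p ↦ Σ_{i,j} M i j · X i · ∂_j p.  This is the action on the symmetric algebra
induced functorially by the action of M on the linear span of the variables. -/
def polyAct {N : Type} [Fintype N] [DecidableEq N] (M : Matrix N N k) :
    MvPolynomial N k →ₗ[k] MvPolynomial N k :=
  ∑ i, ∑ j, M i j •
    ((LinearMap.mulLeft k (MvPolynomial.X i)).comp
      (MvPolynomial.pderiv j).toLinearMap)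

/-- The exponent of the basis monomial X₀^i X₁^(n−i) of the n-th symmetric
power of a 2-dimensional space. -/
def expnt (n : ℕ) (i : Fin (n + 1)) : Fin 2 →₀ ℕ :=
  Finsupp.single 0 (i : ℕ) + Finsupp.single 1 (n - (i : ℕ))

/-- The basis monomial X₀^i X₁^(n−i) of S^n(k²). -/
def monp (n : ℕ) (i : Fin (n + 1)) : MvPolynomial (Fin 2) k :=
  MvPolynomial.monomial (expnt n i) (1 : k)

/-- The matrix of the action induced on S^n(V) by the endomorphism of V with
matrix M, in the monomial basis. -/
def matSym (n : ℕ) (M : Matrix (Fin 2) (Fin 2) k) :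
    Matrix (Fin (n + 1)) (Fin (n + 1)) k :=
  fun i j => MvPolynomial.coeff (expnt n i) (polyAct M (monp n j))

/-- The matrix of the action induced on Λ^m(k^N) by M ∈ gl_N, in the basis
indexed by m-element subsets of Fin N: the entry at (T, S) is the coefficient
of ε in the T,S-minor of 1 + εM (the derivative at the identity of the action
of GL_N on Λ^m(k^N) by minors). -/
def extMat {N : Type} [Fintype N] [DecidableEq N] [LinearOrder N] (m : ℕ)
    (M : Matrix N N k) (T S : {s : Finset N // s.card = m}) : k :=
  (Matrix.det (Matrix.of fun a b : Fin m =>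
    ((if (T.1.orderIsoOfFin T.2 a : N) = (S.1.orderIsoOfFin S.2 b : N)
        then 1 else 0) +
      Polynomial.X *
        Polynomial.C (M (T.1.orderIsoOfFin T.2 a) (S.1.orderIsoOfFin S.2 b))
      : Polynomial k))).coeff 1

end Herm

open Herm MvPolynomial Module

/-!
All the modules involved embed equivariantly into the polynomial functions of `m` points of the
plane. By polarization, `S^m(S^n(V))` is the space of symmetric functions of degree `n` in each
point, and `Λ^m(S^N(V))` is the space of antisymmetric functions of degree `N` in each point.
Polarizing the elements of `S^m(V)` also maps `S^n(S^m(V))` to symmetric functions of degree `n` in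
each point; on an affine line this map produces polynomials in the elementary symmetric
polynomials, which are algebraically independent, so it is injective. Multiplication by the
Vandermonde determinant, of degree `m - 1` in each point, carries symmetric functions to
antisymmetric ones, and `gl(V)` acts on the determinant through a multiple of the trace. In both
cases the dimensions agree, so the injections are isomorphisms.
-/

namespace HermiteReciprocity

section Derivations

variable {k A : Type*} [CommRing k] [CommRing A] [Algebra k A]

theorem derivation_prod {ι : Type*} [DecidableEq ι] (D : Derivation k A A) (s : Finset ι)
    (f : ι → A) : D (∏ i ∈ s, f i) = ∑ i ∈ s, (∏ l ∈ s.erase i, f l) * D (f i) := by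
  induction s using Finset.induction_on with
  | empty => simp
  | insert a s ha ih =>
    rw [Finset.prod_insert ha, Derivation.leibniz, ih, Finset.sum_insert ha,
      Finset.erase_insert ha, smul_eq_mul, smul_eq_mul, Finset.mul_sum, add_comm]
    refine congrArg₂ _ rfl (Finset.sum_congr rfl fun i hi => ?_)
    have hai : a ≠ i := fun h => ha (h ▸ hi)
    rw [Finset.erase_insert_of_ne hai, Finset.prod_insert (by simp [ha]), mul_assoc]

theorem derivation_prod_eq_smul {ι : Type*} (D : Derivation k A A) (s : Finset ι)
    {f : ι → A} {c : ι → k} (h : ∀ i ∈ s, D (f i) = c i • f i) :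
    D (∏ i ∈ s, f i) = (∑ i ∈ s, c i) • ∏ i ∈ s, f i := by
  classical
  rw [derivation_prod, Finset.sum_smul]
  refine Finset.sum_congr rfl fun i hi => ?_
  rw [h i hi, mul_smul_comm, Finset.prod_erase_mul s f hi]

end Derivations

section PolyAct

variable {k N : Type} [Field k] [Fintype N] [DecidableEq N]

theorem polyAct_mul (M : Matrix N N k) (p q : MvPolynomial N k) :
    polyAct M (p * q) = p * polyAct M q + q * polyAct M p := by
  simp only [polyAct, LinearMap.sum_apply, LinearMap.smul_apply, LinearMap.comp_apply,
    LinearMap.mulLeft_apply, Derivation.coeFn_coe, Derivation.leibniz, smul_eq_mul,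
    Finset.mul_sum, ← Finset.sum_add_distrib, mul_smul_comm, ← smul_add]
  refine Finset.sum_congr rfl fun i _ => Finset.sum_congr rfl fun j _ => ?_
  ring_nf

/-- The derivation `polyAct M` of the polynomial algebra, bundled as a `Derivation`. -/
def polyDerivation (M : Matrix N N k) :
    Derivation k (MvPolynomial N k) (MvPolynomial N k) :=
  Derivation.mk' (polyAct M) (polyAct_mul M)

theorem polyDerivation_apply (M : Matrix N N k) (p : MvPolynomial N k) :
    polyDerivation M p = polyAct M p := rfl

theorem polyAct_X (M : Matrix N N k) (i : N) :
    polyAct M (X i) = ∑ l, M l i • (X l : MvPolynomial N k) := by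
  simp [polyAct, pderiv_X, Pi.single_apply]

theorem isHomogeneous_polyAct (M : Matrix N N k) {p : MvPolynomial N k} {m : ℕ}
    (hp : p.IsHomogeneous m) : (polyAct M p).IsHomogeneous m := by
  have term (i j : N) : (X i * pderiv j p).IsHomogeneous m := by
    cases m with
    | zero =>
      rw [totalDegree_eq_zero_iff_eq_C.1 (Nat.le_zero.1 hp.totalDegree_le), pderiv_C, mul_zero]
      exact isHomogeneous_zero ..
    | succ m => simpa [add_comm] using (isHomogeneous_X k i).mul (hp.pderiv (i := j))
  simp only [polyAct, LinearMap.sum_apply, LinearMap.smul_apply]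
  exact Submodule.sum_mem (homogeneousSubmodule N k m) fun i _ => Submodule.sum_mem _ fun j _ =>
    Submodule.smul_mem _ _ (term i j)

theorem derivation_map_eq_map_polyAct {A : Type*} [CommRing A] [Algebra k A]
    (D : Derivation k A A) (φ : MvPolynomial N k →ₐ[k] A) (M : Matrix N N k)
    (h : ∀ i, D (φ (X i)) = ∑ l, M l i • φ (X l)) (p : MvPolynomial N k) :
    D (φ p) = φ (polyAct M p) := by
  induction p using MvPolynomial.induction_on with
  | C a =>
    rw [← algebraMap_eq, ← polyDerivation_apply, Derivation.map_algebraMap, AlgHom.commutes,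
      Derivation.map_algebraMap, map_zero]
  | add p q hp hq => simp only [map_add, hp, hq]
  | mul_X p i hp =>
    simp only [map_mul, polyAct_mul, map_add, Derivation.leibniz, smul_eq_mul, hp, h, polyAct_X,
      map_sum, map_smul]

end PolyAct

section Tensors

variable {k ι N A : Type*} [CommRing k] [Fintype ι] [DecidableEq ι] [Fintype N]
  [CommRing A] [Algebra k A]

/-- The action of a matrix on the tensor power `(k^N)^{⊗ι}`, a tensor being given by its
coordinates, indexed by words `ι → N`. -/
def tensorAct (M : Matrix N N k) (c : (ι → N) → k) : (ι → N) → k :=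
  fun a => ∑ j, ∑ i, M (a j) i * c (Function.update a j i)

/-- The linear map `e_{a₁} ⊗ ⋯ ⊗ e_{aₘ} ↦ f₁(a₁) ⋯ fₘ(aₘ)` from tensors to a commutative algebra. -/
def tensorLift (f : ι → N → A) : ((ι → N) → k) →ₗ[k] A :=
  Fintype.linearCombination k fun a => ∏ j, f j (a j)

theorem tensorLift_apply (f : ι → N → A) (c : (ι → N) → k) :
    tensorLift f c = ∑ a, c a • ∏ j, f j (a j) :=
  Fintype.linearCombination_apply ..

theorem sum_sum_update_comm {R : Type*} [AddCommMonoid R] (j : ι)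
    (F : (ι → N) → (ι → N) → R) :
    ∑ a : ι → N, ∑ i, F a (Function.update a j i) =
      ∑ a : ι → N, ∑ i, F (Function.update a j i) a := by
  rw [← Finset.sum_product', ← Finset.sum_product']
  refine Finset.sum_bij' (fun x _ => (Function.update x.1 j x.2, x.1 j))
    (fun x _ => (Function.update x.1 j x.2, x.1 j)) ?_ ?_ ?_ ?_ ?_ <;> simp

theorem tensorLift_tensorAct (D : Derivation k A A) {f : ι → N → A} {M : Matrix N N k}
    (hf : ∀ j i, D (f j i) = ∑ l, M l i • f j l) (c : (ι → N) → k) :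
    tensorLift f (tensorAct M c) = D (tensorLift f c) := by
  have leibniz : ∀ a : ι → N, D (∏ j, f j (a j)) =
      ∑ j, ∑ i, M i (a j) • ∏ l, f l (Function.update a j i l) := by
    intro a
    rw [derivation_prod]
    refine Finset.sum_congr rfl fun j _ => ?_
    rw [hf, Finset.mul_sum]
    refine Finset.sum_congr rfl fun i _ => ?_
    rw [mul_smul_comm, ← Finset.prod_erase_mul Finset.univ _ (Finset.mem_univ j),
      Function.update_self]
    congr 2
    refine Finset.prod_congr rfl fun l hl => ?_
    rw [Function.update_of_ne (Finset.ne_of_mem_erase hl)]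
  simp only [tensorLift_apply, map_sum, Derivation.map_smul, leibniz, tensorAct, Finset.sum_smul,
    Finset.smul_sum]
  rw [Finset.sum_comm]
  conv_rhs => rw [Finset.sum_comm]
  refine Finset.sum_congr rfl fun j _ => ?_
  have key := sum_sum_update_comm j
    fun a b : ι → N => (M (a j) (b j) * c b) • ∏ l, f l (a l)
  simpa only [Function.update_self, mul_comm, mul_smul] using key

theorem tensorAct_comp_perm (M : Matrix N N k) (c : (ι → N) → k) (σ : Equiv.Perm ι)
    (a : ι → N) : tensorAct M c (a ∘ σ) = tensorAct M (fun b => c (b ∘ σ)) a := by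
  rw [tensorAct, tensorAct, ← Equiv.sum_comp σ fun j => ∑ i, M (a j) i * _]
  refine Finset.sum_congr rfl fun j _ => Finset.sum_congr rfl fun i _ => ?_
  rw [Function.comp_apply, ← Function.update_comp_eq_of_injective a σ.injective]

theorem map_tensorLift {f : ι → N → A} (φ : A →ₐ[k] A) {σ : Equiv.Perm ι}
    (hφ : ∀ j i, φ (f j i) = f (σ j) i) (c : (ι → N) → k) :
    φ (tensorLift f c) = tensorLift f fun a => c (a ∘ σ) := by
  simp only [tensorLift_apply, map_sum, map_smul, map_prod, hφ]
  rw [← Equiv.sum_comp (σ.arrowCongr (Equiv.refl N)) fun a => c (a ∘ σ) • ∏ j, f j (a j)]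
  refine Finset.sum_congr rfl fun a _ => ?_
  rw [← Equiv.prod_comp σ fun j => f j _]
  simp [Equiv.arrowCongr, Function.comp_def]

theorem isWeightedHomogeneous_tensorLift {τ P : Type*} [AddCommMonoid P] {w : τ → P}
    {f : ι → N → MvPolynomial τ k} {d : ι → P}
    (hf : ∀ j i, IsWeightedHomogeneous w (f j i) (d j)) (c : (ι → N) → k) :
    IsWeightedHomogeneous w (tensorLift f c) (∑ j, d j) := by
  rw [tensorLift_apply]
  refine IsWeightedHomogeneous.sum _ _ _ fun a _ => ?_
  rw [smul_eq_C_mul]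
  exact (IsWeightedHomogeneous.prod _ _ _ fun j _ => hf j (a j)).C_mul _

theorem isHomogeneous_tensorLift_X {m : ℕ} (c : (Fin m → N) → k) :
    (tensorLift (fun _ => X) c : MvPolynomial N k).IsHomogeneous m := by
  have h := isWeightedHomogeneous_tensorLift (d := fun _ : Fin m => 1)
    (fun _ i => isHomogeneous_X k i) c
  rwa [Finset.sum_const, Finset.card_univ, Fintype.card_fin, smul_eq_mul, mul_one] at h

end Tensors

section Content

variable {m : ℕ} {N : Type*}

/-- The number of occurrences of each letter in the word `a`, that is, the exponent of the
monomial `∏ j, X (a j)`. -/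
def content (a : Fin m → N) : N →₀ ℕ := ∑ j, Finsupp.single (a j) 1

theorem content_comp_perm (a : Fin m → N) (σ : Equiv.Perm (Fin m)) :
    content (a ∘ σ) = content a :=
  Equiv.sum_comp σ fun j => Finsupp.single (a j) 1

theorem exists_perm_of_content_eq {a b : Fin m → N} (h : content a = content b) :
    ∃ σ : Equiv.Perm (Fin m), b ∘ σ = a := by
  classical
  have card_fiber (i : N) : Fintype.card {j // a j = i} = Fintype.card {j // b j = i} := by
    have hi := DFunLike.congr_fun h i
    simpa only [content, Finsupp.coe_finsetSum, Finset.sum_apply, Finsupp.single_apply,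
      Finset.sum_boole, Nat.cast_id, ← Fintype.card_subtype] using hi
  let e (i : N) : {j // a j = i} ≃ {j // b j = i} := Fintype.equivOfCardEq (card_fiber i)
  exact ⟨Equiv.ofFiberEquiv e, funext fun j => Equiv.ofFiberEquiv_map e j⟩

theorem exists_content_eq {d : N →₀ ℕ} (hd : d.degree = m) : ∃ a : Fin m → N, content a = d := by
  induction m generalizing d with
  | zero => exact ⟨Fin.elim0, by simpa [content] using ((Finsupp.degree_eq_zero_iff d).1 hd).symm⟩
  | succ m ih =>
    obtain ⟨i, hi⟩ : ∃ i, d i ≠ 0 := by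
      by_contra! h
      simp [show d = 0 from Finsupp.ext h] at hd
    have split : Finsupp.single i 1 + (d - Finsupp.single i 1) = d :=
      add_tsub_cancel_of_le (by simpa [Nat.one_le_iff_ne_zero] using hi)
    obtain ⟨a, ha⟩ := ih (d := d - Finsupp.single i 1) (by
      have := congrArg Finsupp.degree split
      rw [map_add, Finsupp.degree_single, hd] at this
      omega)
    exact ⟨Fin.cons i a, by
      simpa only [content, Fin.sum_univ_succ, Fin.cons_zero, Fin.cons_succ, split]
        using congrArg (Finsupp.single i 1 + ·) ha |>.trans split⟩

theorem prod_X_eq_monomial_content {k : Type*} [CommSemiring k] (a : Fin m → N) :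
    (∏ j, X (a j) : MvPolynomial N k) = monomial (content a) 1 := by
  rw [content, monomial_sum_one]
  rfl

end Content

section SymTensor

variable {k N : Type*} {m : ℕ} [Field k] [Fintype N] [DecidableEq N]

/-- The symmetric tensor of rank `m` representing a polynomial of degree `m` by polarization: the
coefficient of a monomial is shared equally among the words that spell it. -/
def symTensor (m : ℕ) : MvPolynomial N k →ₗ[k] ((Fin m → N) → k) :=
  LinearMap.pi fun a =>
    (Fintype.card {b : Fin m → N // content b = content a} : k)⁻¹ • lcoeff k (content a)

theorem symTensor_apply (p : MvPolynomial N k) (a : Fin m → N) :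
    symTensor m p a =
      (Fintype.card {b : Fin m → N // content b = content a} : k)⁻¹ * coeff (content a) p := rfl

theorem symTensor_comp_perm (p : MvPolynomial N k) (a : Fin m → N) (σ : Equiv.Perm (Fin m)) :
    symTensor m p (a ∘ σ) = symTensor m p a := by
  simp only [symTensor_apply, content_comp_perm]

theorem card_content_ne_zero [CharZero k] (a : Fin m → N) :
    (Fintype.card {b : Fin m → N // content b = content a} : k) ≠ 0 :=
  have : Nonempty {b : Fin m → N // content b = content a} := ⟨⟨a, rfl⟩⟩
  Nat.cast_ne_zero.2 Fintype.card_ne_zero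

theorem coeff_tensorLift_X (c : (Fin m → N) → k) (d : N →₀ ℕ) :
    coeff d (tensorLift (fun _ => X) c) = ∑ b : {b : Fin m → N // content b = d}, c b := by
  simp only [tensorLift_apply, prod_X_eq_monomial_content, coeff_sum, coeff_smul, coeff_monomial,
    smul_eq_mul, mul_ite, mul_one, mul_zero, ← Finset.sum_filter]
  exact Finset.sum_subtype _ (by simp) _

theorem symTensor_tensorLift_X [CharZero k] {c : (Fin m → N) → k}
    (hc : ∀ a (σ : Equiv.Perm (Fin m)), c (a ∘ σ) = c a) :
    symTensor m (tensorLift (fun _ => X) c : MvPolynomial N k) = c := by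
  funext a
  have const (b : {b : Fin m → N // content b = content a}) : c b = c a := by
    obtain ⟨σ, hσ⟩ := exists_perm_of_content_eq b.2
    rw [← hσ, hc]
  simp only [symTensor_apply, coeff_tensorLift_X, const, Finset.sum_const, Finset.card_univ,
    nsmul_eq_mul]
  exact inv_mul_cancel_left₀ (card_content_ne_zero a) _

theorem tensorLift_X_symTensor [CharZero k] {p : MvPolynomial N k} (hp : p.IsHomogeneous m) :
    tensorLift (fun _ => X) (symTensor m p) = p := by
  ext d
  rw [coeff_tensorLift_X]
  by_cases hd : d.degree = m
  · obtain ⟨a, rfl⟩ := exists_content_eq hd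
    have const (b : {b : Fin m → N // content b = content a}) :
        symTensor m p b = symTensor m p a := by
      simp only [symTensor_apply, b.2]
    simp only [const, Finset.sum_const, Finset.card_univ, nsmul_eq_mul, symTensor_apply]
    exact mul_inv_cancel_left₀ (card_content_ne_zero a) _
  · have : coeff d (tensorLift (fun _ => X) (symTensor m p) : MvPolynomial N k) = 0 :=
      (isHomogeneous_tensorLift_X _).coeff_eq_zero hd
    rw [← coeff_tensorLift_X, this, hp.coeff_eq_zero hd]

end SymTensor

section SymTensorAction

variable {k N : Type} {m : ℕ} [Field k] [Fintype N] [DecidableEq N]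

theorem tensorLift_X_tensorAct (M : Matrix N N k) (c : (Fin m → N) → k) :
    tensorLift (fun _ => X) (tensorAct M c) = polyAct M (tensorLift (fun _ => X) c) :=
  tensorLift_tensorAct (polyDerivation M) (fun _ i => polyAct_X M i) c

theorem symTensor_polyAct [CharZero k] (M : Matrix N N k) {p : MvPolynomial N k}
    (hp : p.IsHomogeneous m) :
    symTensor m (polyAct M p) = tensorAct M (symTensor m p) := by
  conv_lhs => rw [← tensorLift_X_symTensor hp, ← tensorLift_X_tensorAct]
  refine symTensor_tensorLift_X fun a σ => ?_
  simp only [tensorAct_comp_perm, symTensor_comp_perm]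

end SymTensorAction

section SymLift

variable {k N A : Type*} {m : ℕ} [Field k] [Fintype N] [DecidableEq N] [CommRing A] [Algebra k A]

/-- The map `S^m(k^N) → A` sending `v^m` to `f₁(v) ⋯ fₘ(v)`, where `fⱼ(v) = ∑ i, v i • f j i`. -/
def symLift (f : Fin m → N → A) : MvPolynomial N k →ₗ[k] A :=
  tensorLift f ∘ₗ symTensor m

theorem symLift_apply (f : Fin m → N → A) (p : MvPolynomial N k) :
    symLift f p = tensorLift f (symTensor m p) := rfl

theorem map_symLift {f : Fin m → N → A} (φ : A →ₐ[k] A) {σ : Equiv.Perm (Fin m)}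
    (hφ : ∀ j i, φ (f j i) = f (σ j) i) (p : MvPolynomial N k) :
    φ (symLift f p) = symLift f p := by
  simp only [symLift_apply, map_tensorLift φ hφ, symTensor_comp_perm]

end SymLift

theorem symLift_polyAct {k N : Type} {A : Type*} {m : ℕ} [Field k] [CharZero k] [Fintype N]
    [DecidableEq N] [CommRing A] [Algebra k A] (D : Derivation k A A) {f : Fin m → N → A}
    {M : Matrix N N k}
    (hf : ∀ j i, D (f j i) = ∑ l, M l i • f j l) {p : MvPolynomial N k} (hp : p.IsHomogeneous m) :
    symLift f (polyAct M p) = D (symLift f p) := by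
  rw [symLift_apply, symTensor_polyAct M hp, tensorLift_tensorAct D hf, symLift_apply]

section SortedWords

variable {m : ℕ} {N : Type*} [LinearOrder N]

/-- The increasing word whose letters are the elements of the `m`-element set `S`. -/
def sortedWord (S : {s : Finset N // s.card = m}) : Fin m → N := S.1.orderEmbOfFin S.2

theorem sortedWord_injective (S : {s : Finset N // s.card = m}) :
    Function.Injective (sortedWord S) :=
  (S.1.orderEmbOfFin S.2).injective

theorem range_sortedWord (S : {s : Finset N // s.card = m}) :
    Set.range (sortedWord S) = S.1 :=
  S.1.range_orderEmbOfFin S.2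

theorem sortedWord_mem (S : {s : Finset N // s.card = m}) (j : Fin m) : sortedWord S j ∈ S.1 :=
  S.1.orderEmbOfFin_mem S.2 j

theorem exists_sortedWord_comp_perm_eq {a : Fin m → N} (ha : Function.Injective a) :
    ∃ (S : {s : Finset N // s.card = m}) (σ : Equiv.Perm (Fin m)), sortedWord S ∘ σ = a := by
  let S : {s : Finset N // s.card = m} :=
    ⟨Finset.univ.image a, by rw [Finset.card_image_of_injective _ ha, Finset.card_fin]⟩
  let rank (j : Fin m) : Fin m := (S.1.orderIsoOfFin S.2).symm
    ⟨a j, Finset.mem_image_of_mem a (Finset.mem_univ j)⟩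
  have rank_injective : Function.Injective rank := fun i j h => by
    simpa [rank, ha.eq_iff] using h
  refine ⟨S, Equiv.ofBijective rank (Finite.injective_iff_bijective.1 rank_injective), ?_⟩
  funext j
  simp only [sortedWord, Function.comp_apply, Equiv.ofBijective_apply,
    ← Finset.coe_orderIsoOfFin_apply, rank, OrderIso.apply_symm_apply]

theorem sortedWord_comp_perm_injective :
    Function.Injective fun x : {s : Finset N // s.card = m} × Equiv.Perm (Fin m) =>
      sortedWord x.1 ∘ x.2 := by
  rintro ⟨S, σ⟩ ⟨S', σ'⟩ h
  have hS : S = S' := by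
    have hrange := congrArg Set.range h
    simp only [σ.surjective.range_comp, σ'.surjective.range_comp, range_sortedWord] at hrange
    exact Subtype.ext (Finset.coe_injective hrange)
  subst hS
  have hσ : σ = σ' := Equiv.ext fun j => sortedWord_injective S (congrFun h j)
  rw [hσ]

theorem sum_eq_sum_sortedWord_comp_perm [Fintype N] {R : Type*} [AddCommMonoid R]
    {F : (Fin m → N) → R} (hF : ∀ a, ¬ Function.Injective a → F a = 0) :
    ∑ a, F a = ∑ S : {s : Finset N // s.card = m}, ∑ σ : Equiv.Perm (Fin m),
      F (sortedWord S ∘ σ) := by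
  rw [← Fintype.sum_prod_type']
  symm
  refine Finset.sum_of_injOn _ sortedWord_comp_perm_injective.injOn (fun _ _ => Finset.mem_univ _)
    (fun a _ ha => hF a fun ha_inj => ha ?_) fun _ _ => rfl
  obtain ⟨S, σ, h⟩ := exists_sortedWord_comp_perm_eq ha_inj
  exact ⟨(S, σ), by simp, h⟩

end SortedWords

section IsAlternating

variable {m : ℕ} {N A : Type*} [CommRing A]

/-- Antisymmetry of a tensor of rank `m` under permutation of its tensor factors. -/
def IsAlternating (c : (Fin m → N) → A) : Prop :=
  ∀ (σ : Equiv.Perm (Fin m)) (a : Fin m → N), c (a ∘ σ) = Equiv.Perm.sign σ • c a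

variable [NoZeroDivisors A] [CharZero A] {c : (Fin m → N) → A}

theorem IsAlternating.eq_zero_of_not_injective (hc : IsAlternating c) {a : Fin m → N}
    (ha : ¬ Function.Injective a) : c a = 0 := by
  obtain ⟨i, j, hij, hne⟩ := Function.not_injective_iff.1 ha
  have swap_eq : a ∘ Equiv.swap i j = a := by
    rw [Equiv.comp_swap_eq_update, hij, Function.update_eq_self, ← hij, Function.update_eq_self]
  have h := hc (Equiv.swap i j) a
  rw [swap_eq, Equiv.Perm.sign_swap hne, Units.neg_smul, one_smul] at h
  exact self_eq_neg.1 h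

variable [LinearOrder N]

theorem IsAlternating.ext {c' : (Fin m → N) → A} (hc : IsAlternating c) (hc' : IsAlternating c')
    (h : ∀ S : {s : Finset N // s.card = m}, c (sortedWord S) = c' (sortedWord S)) : c = c' := by
  funext a
  by_cases ha : Function.Injective a
  · obtain ⟨S, σ, rfl⟩ := exists_sortedWord_comp_perm_eq ha
    rw [hc, hc', h]
  · rw [hc.eq_zero_of_not_injective ha, hc'.eq_zero_of_not_injective ha]

theorem IsAlternating.sum_prod_mul [Fintype N] (hc : IsAlternating c) (B : Matrix (Fin m) N A) :
    ∑ a, (∏ j, B j (a j)) * c a = ∑ S : {s : Finset N // s.card = m},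
      (B.submatrix id (sortedWord S)).det * c (sortedWord S) := by
  rw [sum_eq_sum_sortedWord_comp_perm fun a ha => by
    rw [hc.eq_zero_of_not_injective ha, mul_zero]]
  refine Finset.sum_congr rfl fun S _ => ?_
  rw [← Matrix.det_transpose, Matrix.det_apply, Finset.sum_mul]
  refine Finset.sum_congr rfl fun σ _ => ?_
  rw [hc, mul_smul_comm, smul_mul_assoc]
  rfl

end IsAlternating

section ExteriorAction

theorem coeff_one_prod_C_add_X_mul_C {R : Type*} [CommRing R] {m : ℕ} (f g : Fin m → R) :
    (∏ j, (Polynomial.C (f j) + Polynomial.X * Polynomial.C (g j))).coeff 1 =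
      ∑ j, g j * ∏ l ∈ Finset.univ.erase j, f l := by
  have coeff_one (p : Polynomial R) : p.coeff 1 = (Polynomial.derivative p).eval 0 := by
    rw [← Polynomial.coeff_zero_eq_eval_zero, Polynomial.coeff_derivative]
    simp
  rw [coeff_one, Polynomial.derivative_prod_finset, Polynomial.eval_finsetSum]
  refine Finset.sum_congr rfl fun j _ => ?_
  rw [Polynomial.eval_mul, Polynomial.eval_prod, mul_comm]
  simp

theorem sum_mul_prod_erase_one {R ι N : Type*} [CommRing R] [Fintype ι] [DecidableEq ι] [Fintype N]
    [DecidableEq N] (F : (ι → N) → R) (t : ι → N) (j : ι) :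
    ∑ a, F a * ∏ l ∈ Finset.univ.erase j, (1 : Matrix N N R) (t l) (a l) =
      ∑ i, F (Function.update t j i) := by
  symm
  refine Finset.sum_of_injOn (Function.update t j) (Function.update_injective t j).injOn
    (fun _ _ => Finset.mem_univ _) (fun a _ ha => ?_) fun i _ => ?_
  · obtain ⟨l, hlj, hl⟩ : ∃ l, l ≠ j ∧ t l ≠ a l := by
      by_contra! h
      exact ha ⟨a j, by simp, Function.update_eq_iff.2 ⟨rfl, h⟩⟩
    exact mul_eq_zero_of_right _ (Finset.prod_eq_zero
      (Finset.mem_erase.2 ⟨hlj, Finset.mem_univ l⟩) (Matrix.one_apply_ne hl))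
  · rw [Finset.prod_eq_one fun l hl => by
      rw [Function.update_of_ne (Finset.ne_of_mem_erase hl), Matrix.one_apply_eq], mul_one]

variable {k N : Type} {m : ℕ} [Field k] [CharZero k] [Fintype N] [LinearOrder N]

theorem extMat_mulVec_sortedWord (M : Matrix N N k) {c : (Fin m → N) → k} (hc : IsAlternating c)
    (T : {s : Finset N // s.card = m}) :
    (Matrix.of (extMat m M)).mulVec (fun S => c (sortedWord S)) T =
      tensorAct M c (sortedWord T) := by
  let B : Matrix (Fin m) N (Polynomial k) := Matrix.of fun j i =>
    Polynomial.C ((1 : Matrix N N k) (sortedWord T j) i) +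
      Polynomial.X * Polynomial.C (M (sortedWord T j) i)
  have extMat_eq (S : {s : Finset N // s.card = m}) :
      extMat m M T S = (B.submatrix id (sortedWord S)).det.coeff 1 := by
    simp only [extMat, Finset.coe_orderIsoOfFin_apply]
    congr 2
    ext1 i j
    by_cases h : sortedWord T i = sortedWord S j <;> simp_all [B, sortedWord, Matrix.one_apply]
  have hC : IsAlternating fun a => Polynomial.C (c a) := fun σ a => by
    simp only [hc σ a, Units.smul_def, map_zsmul]
  calc (Matrix.of (extMat m M)).mulVec (fun S => c (sortedWord S)) T
      = (∑ S : {s : Finset N // s.card = m}, (B.submatrix id (sortedWord S)).det *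
          Polynomial.C (c (sortedWord S))).coeff 1 := by
        simp [Matrix.mulVec, dotProduct, extMat_eq, Polynomial.finsetSum_coeff]
    _ = ∑ a, (∏ j, B j (a j)).coeff 1 * c a := by
        rw [← hC.sum_prod_mul B]
        simp [Polynomial.finsetSum_coeff]
    _ = ∑ j, ∑ a, M (sortedWord T j) (a j) * c a *
          ∏ l ∈ Finset.univ.erase j, (1 : Matrix N N k) (sortedWord T l) (a l) := by
        simp only [B, Matrix.of_apply, coeff_one_prod_C_add_X_mul_C, Finset.sum_mul, mul_right_comm]
        exact Finset.sum_comm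
    _ = tensorAct M c (sortedWord T) := by
        simp only [sum_mul_prod_erase_one, Function.update_self, tensorAct]

end ExteriorAction

section ExtTensor

variable {k N : Type*} {m : ℕ} [Field k] [Fintype N] [LinearOrder N]

/-- The alternating tensor with prescribed coordinates on increasing words; the `m`-element set
`S = {s₁ < ⋯ < sₘ}` goes to the antisymmetrization of `e_{s₁} ⊗ ⋯ ⊗ e_{sₘ}`. -/
def extTensor (m : ℕ) : ({s : Finset N // s.card = m} → k) →ₗ[k] ((Fin m → N) → k) :=
  Fintype.linearCombination k fun S a => ((1 : Matrix N N k).submatrix a (sortedWord S)).det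

theorem extTensor_apply (v : {s : Finset N // s.card = m} → k) (a : Fin m → N) :
    extTensor m v a = ∑ S, v S * ((1 : Matrix N N k).submatrix a (sortedWord S)).det := by
  simp [extTensor, Fintype.linearCombination_apply]

theorem isAlternating_extTensor (v : {s : Finset N // s.card = m} → k) :
    IsAlternating (extTensor m v) := by
  intro σ a
  rw [extTensor_apply, extTensor_apply, Finset.smul_sum]
  refine Finset.sum_congr rfl fun S _ => ?_
  rw [← mul_smul_comm, Units.smul_def, zsmul_eq_mul, ← Matrix.det_permute]
  rfl

theorem extTensor_sortedWord (v : {s : Finset N // s.card = m} → k)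
    (T : {s : Finset N // s.card = m}) : extTensor m v (sortedWord T) = v T := by
  rw [extTensor_apply, Fintype.sum_eq_single T]
  · rw [Matrix.submatrix_one _ (sortedWord_injective T), Matrix.det_one, mul_one]
  · intro S hS
    obtain ⟨x, hxT, hxS⟩ : ∃ x ∈ T.1, x ∉ S.1 := Finset.not_subset.1 fun h =>
      hS (Subtype.ext (Finset.eq_of_subset_of_card_le h (by rw [S.2, T.2])).symm)
    obtain ⟨i, rfl⟩ : x ∈ Set.range (sortedWord T) := by rwa [range_sortedWord]
    refine mul_eq_zero_of_right _ (Matrix.det_eq_zero_of_row_eq_zero i fun j => ?_)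
    refine Matrix.one_apply_ne fun h => hxS ?_
    rw [h]
    exact sortedWord_mem S j

theorem extTensor_comp_sortedWord [CharZero k] {c : (Fin m → N) → k} (hc : IsAlternating c) :
    extTensor m (fun S => c (sortedWord S)) = c :=
  (isAlternating_extTensor _).ext hc fun S => extTensor_sortedWord _ S

end ExtTensor

theorem extTensor_extMat_mulVec {k N : Type} {m : ℕ} [Field k] [CharZero k] [Fintype N]
    [LinearOrder N] (M : Matrix N N k) (v : {s : Finset N // s.card = m} → k) :
    extTensor m ((Matrix.of (extMat m M)).mulVec v) = tensorAct M (extTensor m v) := by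
  have hv : IsAlternating (extTensor m v) := isAlternating_extTensor v
  have hact : IsAlternating (tensorAct M (extTensor m v)) := fun σ a => by
    rw [tensorAct_comp_perm]
    simp only [hv σ, tensorAct, mul_smul_comm, Finset.smul_sum]
  refine (isAlternating_extTensor _).ext hact fun T => ?_
  rw [extTensor_sortedWord, ← extMat_mulVec_sortedWord M hv]
  simp only [extTensor_sortedWord]

/-- The map `Λ^m(k^N) → A` sending `v₁ ∧ ⋯ ∧ vₘ` to the determinant of the `fⱼ(vᵢ)`, where
`fⱼ(v) = ∑ i, v i • f j i`. -/
def extLift {k N A : Type*} {m : ℕ} [Field k] [Fintype N] [LinearOrder N] [CommRing A]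
    [Algebra k A] (f : Fin m → N → A) : ({s : Finset N // s.card = m} → k) →ₗ[k] A :=
  tensorLift f ∘ₗ extTensor m

theorem extLift_extMat_mulVec {k N : Type} {A : Type*} {m : ℕ} [Field k] [CharZero k] [Fintype N]
    [LinearOrder N] [CommRing A] [Algebra k A] (D : Derivation k A A) {f : Fin m → N → A}
    {M : Matrix N N k} (hf : ∀ j i, D (f j i) = ∑ l, M l i • f j l)
    (v : {s : Finset N // s.card = m} → k) :
    extLift f ((Matrix.of (extMat m M)).mulVec v) = D (extLift f v) := by
  rw [extLift, LinearMap.comp_apply, extTensor_extMat_mulVec, tensorLift_tensorAct D hf,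
    LinearMap.comp_apply]

section BinaryForms

variable {k : Type} [Field k] {N : ℕ}

theorem expnt_zero (i : Fin (N + 1)) : expnt N i 0 = i := by simp [expnt]

theorem expnt_one (i : Fin (N + 1)) : expnt N i 1 = N - i := by simp [expnt]

theorem expnt_injective : Function.Injective (expnt N) := fun i j h => by
  simpa only [expnt_zero, Fin.val_inj] using DFunLike.congr_fun h 0

theorem exists_expnt_apply_eq {e : Fin 2 → ℕ} (he : e 0 + e 1 = N) :
    ∃ i : Fin (N + 1), ∀ u, expnt N i u = e u :=
  ⟨⟨e 0, by omega⟩, Fin.forall_fin_two.2 ⟨expnt_zero _, by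
    rw [expnt_one]
    dsimp only
    omega⟩⟩

theorem degree_expnt (i : Fin (N + 1)) : (expnt N i).degree = N := by
  rw [Finsupp.degree_eq_sum, Fin.sum_univ_two, expnt_zero, expnt_one]
  omega

theorem isHomogeneous_monp (i : Fin (N + 1)) :
    (monp N i : MvPolynomial (Fin 2) k).IsHomogeneous N :=
  isHomogeneous_monomial _ (degree_expnt i)

theorem sum_coeff_smul_monp {p : MvPolynomial (Fin 2) k} (hp : p.IsHomogeneous N) :
    ∑ l, coeff (expnt N l) p • monp N l = p := by
  ext d
  simp only [monp, coeff_sum, coeff_smul, coeff_monomial, smul_eq_mul, mul_ite, mul_one, mul_zero]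
  by_cases hd : d.degree = N
  · rw [Finsupp.degree_eq_sum, Fin.sum_univ_two] at hd
    obtain ⟨i, hi⟩ := exists_expnt_apply_eq hd
    obtain rfl : expnt N i = d := Finsupp.ext hi
    simp [expnt_injective.eq_iff]
  · rw [hp.coeff_eq_zero hd, Finset.sum_eq_zero]
    rintro i -
    rw [if_neg fun h : expnt N i = d => hd (h ▸ degree_expnt i)]

theorem polyAct_monp (M : Matrix (Fin 2) (Fin 2) k) (i : Fin (N + 1)) :
    polyAct M (monp N i) = ∑ l, matSym N M l i • monp N l :=
  (sum_coeff_smul_monp (isHomogeneous_polyAct M (isHomogeneous_monp i))).symm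

end BinaryForms

section Points

variable {k : Type*} {m : ℕ} [Field k]

/-- Multihomogeneity of degree `d` in each of the `m` points of the plane: the variables `X (j, 0)`
and `X (j, 1)` are the coordinates of the `j`-th point. -/
def IsMultihomogeneous (g : MvPolynomial (Fin m × Fin 2) k) (d : ℕ) : Prop :=
  IsWeightedHomogeneous (fun z => (Pi.single z.1 1 : Fin m → ℕ)) g fun _ => d

theorem weight_single_apply (d : Fin m × Fin 2 →₀ ℕ) (j : Fin m) :
    Finsupp.weight (fun z : Fin m × Fin 2 => (Pi.single z.1 1 : Fin m → ℕ)) d j =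
      d (j, 0) + d (j, 1) := by
  rw [Finsupp.weight_apply, Finsupp.sum_fintype _ _ (by simp), Fintype.sum_prod_type,
    Finset.sum_apply, Fintype.sum_eq_single j fun i hi => by simp [hi.symm]]
  simp

theorem IsMultihomogeneous.mul {g h : MvPolynomial (Fin m × Fin 2) k} {d e : ℕ}
    (hg : IsMultihomogeneous g d) (hh : IsMultihomogeneous h e) :
    IsMultihomogeneous (g * h) (d + e) :=
  IsWeightedHomogeneous.mul hg hh

theorem isMultihomogeneous_tensorLift {N : Type*} [Fintype N] {d : ℕ}
    {f : Fin m → N → MvPolynomial (Fin m × Fin 2) k}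
    (hf : ∀ j i, IsWeightedHomogeneous (fun z => (Pi.single z.1 1 : Fin m → ℕ)) (f j i)
      (Pi.single j d)) (c : (Fin m → N) → k) : IsMultihomogeneous (tensorLift f c) d := by
  have h := isWeightedHomogeneous_tensorLift hf c
  rwa [Finset.univ_sum_single fun _ : Fin m => d] at h

variable (k) in
/-- The action of a permutation of the `m` points on polynomial functions. -/
def permutePoints (σ : Equiv.Perm (Fin m)) :
    MvPolynomial (Fin m × Fin 2) k →ₐ[k] MvPolynomial (Fin m × Fin 2) k :=
  rename (Prod.map σ id)

theorem permutePoints_X (σ : Equiv.Perm (Fin m)) (j : Fin m) (u : Fin 2) :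
    permutePoints k σ (X (j, u)) = X (σ j, u) :=
  rename_X _ _

/-- The diagonal action of `M ∈ gl₂` on polynomial functions of `m` points of the plane. -/
def pointsDerivation (m : ℕ) (M : Matrix (Fin 2) (Fin 2) k) :
    Derivation k (MvPolynomial (Fin m × Fin 2) k) (MvPolynomial (Fin m × Fin 2) k) :=
  mkDerivation k fun z => ∑ v, M v z.2 • X (z.1, v)

theorem pointsDerivation_X (M : Matrix (Fin 2) (Fin 2) k) (j : Fin m) (u : Fin 2) :
    pointsDerivation m M (X (j, u)) = ∑ v, M v u • X (j, v) :=
  mkDerivation_X ..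

end Points

section BlockMonomials

variable {k : Type} {m N : ℕ} [Field k]

/-- The binary monomial `X₀^i X₁^(N-i)` evaluated at the `j`-th point. -/
def blockMonomial (N : ℕ) (j : Fin m) (i : Fin (N + 1)) : MvPolynomial (Fin m × Fin 2) k :=
  rename (Prod.mk j) (monp N i)

/-- The exponent of the product of block monomials spelled by the word `a`. -/
def wordExponent (a : Fin m → Fin (N + 1)) : Fin m × Fin 2 →₀ ℕ :=
  ∑ j, (expnt N (a j)).mapDomain (Prod.mk j)

theorem wordExponent_apply (a : Fin m → Fin (N + 1)) (j : Fin m) (u : Fin 2) :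
    wordExponent a (j, u) = expnt N (a j) u := by
  rw [wordExponent, Finsupp.finsetSum_apply, Fintype.sum_eq_single j]
  · exact Finsupp.mapDomain_apply (Prod.mk_right_injective j) _ _
  · intro i hi
    exact Finsupp.mapDomain_of_notMem_range _ _ (by simp [hi])

theorem wordExponent_injective :
    Function.Injective (wordExponent : (Fin m → Fin (N + 1)) → Fin m × Fin 2 →₀ ℕ) := by
  intro a b h
  funext j
  refine expnt_injective (Finsupp.ext fun u => ?_)
  rw [← wordExponent_apply, ← wordExponent_apply, h]

theorem blockMonomial_eq (j : Fin m) (i : Fin (N + 1)) :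
    (blockMonomial N j i : MvPolynomial (Fin m × Fin 2) k) =
      monomial ((expnt N i).mapDomain (Prod.mk j)) 1 :=
  rename_monomial ..

theorem prod_blockMonomial (a : Fin m → Fin (N + 1)) :
    (∏ j, blockMonomial N j (a j) : MvPolynomial (Fin m × Fin 2) k) =
      monomial (wordExponent a) 1 := by
  simp only [wordExponent, monomial_sum_one, blockMonomial_eq]

theorem coeff_tensorLift_blockMonomial (c : (Fin m → Fin (N + 1)) → k)
    (a : Fin m → Fin (N + 1)) :
    coeff (wordExponent a) (tensorLift (blockMonomial N) c) = c a := by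
  simp [tensorLift_apply, prod_blockMonomial, coeff_sum, wordExponent_injective.eq_iff]

theorem tensorLift_blockMonomial_injective :
    Function.Injective (tensorLift (blockMonomial N) :
      ((Fin m → Fin (N + 1)) → k) →ₗ[k] MvPolynomial (Fin m × Fin 2) k) := fun c c' h => by
  funext a
  rw [← coeff_tensorLift_blockMonomial c, h, coeff_tensorLift_blockMonomial]

theorem isWeightedHomogeneous_blockMonomial (j : Fin m) (i : Fin (N + 1)) :
    IsWeightedHomogeneous (fun z => (Pi.single z.1 1 : Fin m → ℕ))
      (blockMonomial N j i : MvPolynomial (Fin m × Fin 2) k) (Pi.single j N) := by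
  rw [blockMonomial_eq]
  refine isWeightedHomogeneous_monomial _ _ _ (funext fun l => ?_)
  rw [weight_single_apply]
  rcases eq_or_ne l j with rfl | hl
  · rw [Finsupp.mapDomain_apply (Prod.mk_right_injective l),
      Finsupp.mapDomain_apply (Prod.mk_right_injective l), expnt_zero, expnt_one, Pi.single_eq_same]
    omega
  · rw [Finsupp.mapDomain_of_notMem_range _ _ (by simp [hl.symm]),
      Finsupp.mapDomain_of_notMem_range _ _ (by simp [hl.symm]), Pi.single_eq_of_ne hl, add_zero]

theorem IsMultihomogeneous.exists_tensorLift_blockMonomial_eq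
    {g : MvPolynomial (Fin m × Fin 2) k} (hg : IsMultihomogeneous g N) :
    ∃ c : (Fin m → Fin (N + 1)) → k, tensorLift (blockMonomial N) c = g := by
  refine ⟨fun a => coeff (wordExponent a) g, ?_⟩
  set g' : MvPolynomial (Fin m × Fin 2) k :=
    tensorLift (blockMonomial N) fun a : Fin m → Fin (N + 1) => coeff (wordExponent a) g
  have hg' : IsMultihomogeneous g' N :=
    isMultihomogeneous_tensorLift (fun j i => isWeightedHomogeneous_blockMonomial j i) _
  ext d
  by_cases hd : ∀ j, d (j, 0) + d (j, 1) = N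
  · choose a ha using fun j => exists_expnt_apply_eq (e := fun u => d (j, u)) (hd j)
    obtain rfl : wordExponent a = d :=
      Finsupp.ext fun z => (wordExponent_apply a _ _).trans (ha _ _)
    exact coeff_tensorLift_blockMonomial _ a
  · have hweight : Finsupp.weight (fun z => (Pi.single z.1 1 : Fin m → ℕ)) d ≠ fun _ => N :=
      fun h => hd fun j => by rw [← weight_single_apply, h]
    rw [hg'.coeff_eq_zero d hweight, IsWeightedHomogeneous.coeff_eq_zero hg d hweight]

theorem permutePoints_blockMonomial (σ : Equiv.Perm (Fin m)) (j : Fin m) (i : Fin (N + 1)) :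
    permutePoints k σ (blockMonomial N j i) = blockMonomial N (σ j) i :=
  rename_rename ..

theorem pointsDerivation_blockMonomial (M : Matrix (Fin 2) (Fin 2) k) (j : Fin m)
    (i : Fin (N + 1)) :
    pointsDerivation m M (blockMonomial N j i) = ∑ l, matSym N M l i • blockMonomial N j l := by
  rw [blockMonomial, derivation_map_eq_map_polyAct _ _ M fun u => by
    simp only [rename_X, pointsDerivation_X], polyAct_monp]
  simp only [map_sum, map_smul, blockMonomial]

theorem exists_symLift_blockMonomial_eq [CharZero k] {g : MvPolynomial (Fin m × Fin 2) k}
    (hg : IsMultihomogeneous g N) (hperm : ∀ σ, permutePoints k σ g = g) :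
    ∃ p : MvPolynomial (Fin (N + 1)) k, p.IsHomogeneous m ∧ symLift (blockMonomial N) p = g := by
  obtain ⟨c, rfl⟩ := hg.exists_tensorLift_blockMonomial_eq
  refine ⟨tensorLift (fun _ => X) c, isHomogeneous_tensorLift_X c, ?_⟩
  rw [symLift_apply, symTensor_tensorLift_X fun a σ => ?_]
  have h := hperm σ
  rw [map_tensorLift _ (permutePoints_blockMonomial σ)] at h
  exact congrFun (tensorLift_blockMonomial_injective h) a

theorem symLift_blockMonomial_injOn [CharZero k] : Set.InjOn
    (symLift (blockMonomial N) : _ →ₗ[k] MvPolynomial (Fin m × Fin 2) k)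
    {p | p.IsHomogeneous m} := fun p hp q hq h => by
  rw [← tensorLift_X_symTensor hp, tensorLift_blockMonomial_injective h, tensorLift_X_symTensor hq]

theorem exists_extLift_blockMonomial_eq [CharZero k] {g : MvPolynomial (Fin m × Fin 2) k}
    (hg : IsMultihomogeneous g N)
    (hperm : ∀ σ, permutePoints k σ g = Equiv.Perm.sign σ • g) :
    ∃ v : {s : Finset (Fin (N + 1)) // s.card = m} → k, extLift (blockMonomial N) v = g := by
  obtain ⟨c, rfl⟩ := hg.exists_tensorLift_blockMonomial_eq
  refine ⟨fun S => c (sortedWord S), ?_⟩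
  rw [extLift, LinearMap.comp_apply, extTensor_comp_sortedWord fun σ a => ?_]
  have h := hperm σ
  rw [map_tensorLift _ (permutePoints_blockMonomial σ), Units.smul_def, ← map_zsmul] at h
  exact congrFun (tensorLift_blockMonomial_injective h) a

end BlockMonomials

section Hermite

theorem eq_zero_of_aeval_cons_one_X_eq_zero {k : Type*} [CommSemiring k] {m n : ℕ}
    {p : MvPolynomial (Fin (m + 1)) k} (hp : p.IsHomogeneous n)
    (h : aeval (Fin.cons 1 X : Fin (m + 1) → MvPolynomial (Fin m) k) p = 0) : p = 0 := by
  have aeval_eq : aeval (Fin.cons 1 X : Fin (m + 1) → MvPolynomial (Fin m) k) p =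
      ∑ d ∈ p.support, monomial d.tail (coeff d p) := by
    rw [aeval_def, eval₂_eq']
    refine Finset.sum_congr rfl fun d _ => ?_
    simp [Fin.prod_univ_succ, monomial_eq, Finsupp.prod_fintype, Finsupp.tail_apply]
  have eq_of_tail_eq {d e} (hd : d ∈ p.support) (he : e ∈ p.support)
      (htail : d.tail = e.tail) : d = e := by
    have degree_eq {c} (hc : c ∈ p.support) : c 0 + ∑ i, c.tail i = n := by
      have := not_imp_comm.1 hp.coeff_eq_zero (MvPolynomial.mem_support_iff.1 hc)
      rwa [Finsupp.degree_eq_sum, Fin.sum_univ_succ] at this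
    have head : d 0 = e 0 := by
      have := (degree_eq hd).trans (degree_eq he).symm
      rwa [htail, Nat.add_right_cancel_iff] at this
    rw [← Finsupp.cons_tail d, head, htail, Finsupp.cons_tail]
  ext d
  by_contra hd
  rw [← ne_eq, coeff_zero, ← MvPolynomial.mem_support_iff] at hd
  have coeff_tail := congrArg (coeff d.tail) (aeval_eq.symm.trans h)
  rw [coeff_sum, Finset.sum_eq_single_of_mem d hd fun e he hed => by
    rw [coeff_monomial, if_neg (mt (eq_of_tail_eq he hd) hed)], coeff_monomial, if_pos rfl]
    at coeff_tail
  exact mem_support_iff.1 hd coeff_tail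

theorem aeval_smul_X_injective {k σ : Type*} [Field k] {r : σ → k} (hr : ∀ i, r i ≠ 0) :
    Function.Injective (aeval (R := k) fun i => r i • (X i : MvPolynomial σ k)) := by
  refine Function.LeftInverse.injective (g := aeval fun i => (r i)⁻¹ • X i) fun p => ?_
  rw [comp_aeval_apply]
  simp [hr, smul_smul]

theorem eq_zero_of_aeval_smul_cons_eq_zero {k A : Type*} {m n : ℕ} [Field k] [CommRing A]
    [Algebra k A] {x : Fin m → A} (hx : AlgebraicIndependent k x) {r : Fin (m + 1) → k}
    (hr : ∀ i, r i ≠ 0) {p : MvPolynomial (Fin (m + 1)) k} (hp : p.IsHomogeneous n)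
    (h : aeval (fun i => r i • (Fin.cons 1 x : Fin (m + 1) → A) i) p = 0) : p = 0 := by
  have cons_eq (i) : aeval x ((Fin.cons 1 X : Fin (m + 1) → MvPolynomial (Fin m) k) i) =
      (Fin.cons 1 x : Fin (m + 1) → A) i := by
    cases i using Fin.cases <;> simp
  have scaled_homogeneous : (aeval (fun i => r i • X i) p : MvPolynomial _ k).IsHomogeneous n := by
    have := hp.aeval (n := 1) (fun i => r i • (X i : MvPolynomial (Fin (m + 1)) k)) fun i =>
      (homogeneousSubmodule _ k 1).smul_mem (r i) (isHomogeneous_X k i)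
    rwa [one_mul] at this
  refine aeval_smul_X_injective hr ?_
  rw [map_zero]
  refine eq_zero_of_aeval_cons_one_X_eq_zero scaled_homogeneous (hx ?_)
  rw [comp_aeval_apply, comp_aeval_apply, map_zero]
  simpa only [map_smul, aeval_X, cons_eq] using h

theorem algebraicIndependent_esymm_succ (k : Type*) [CommRing k] (m : ℕ) :
    AlgebraicIndependent k fun i : Fin m => esymm (Fin m) k (i + 1) := by
  intro p q hpq
  refine esymmAlgHom_fin_injective k (le_refl m) (Subtype.ext ?_)
  simpa only [esymmAlgHom_apply] using hpq

section Words

variable {m : ℕ}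

theorem content_eq_expnt_iff {a : Fin m → Fin 2} {i : Fin (m + 1)} :
    content a = expnt m i ↔ ({j | a j = 0} : Finset (Fin m)).card = i := by
  have content_apply (u : Fin 2) : content a u = ({j | a j = u} : Finset (Fin m)).card := by
    simp [content, Finsupp.single_apply]
  have total : content a 0 + content a 1 = m := by
    rw [← Fin.sum_univ_two, ← Finsupp.degree_eq_sum]
    simp [content]
  rw [← content_apply]
  refine ⟨fun h => by rw [h, expnt_zero], fun h => Finsupp.ext (Fin.forall_fin_two.2 ⟨?_, ?_⟩)⟩
  · rw [h, expnt_zero]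
  · rw [expnt_one]
    omega

theorem sum_prod_cons_X_one {k : Type*} [CommSemiring k] (i : Fin (m + 1)) :
    ∑ a : {a : Fin m → Fin 2 // content a = expnt m i}, ∏ j, ![X j, 1] (a.1 j) =
      esymm (Fin m) k i := by
  rw [← Finset.sum_subtype {a | content a = expnt m i} (by simp)
    fun a => ∏ j, (![X j, 1] : Fin 2 → MvPolynomial (Fin m) k) (a j)]
  refine Finset.sum_bij' (fun a _ => ({j | a j = 0} : Finset (Fin m)))
    (fun s _ j => if j ∈ s then 0 else 1) (fun a ha => ?_) (fun s hs => ?_) (fun a _ => ?_)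
    (fun s _ => ?_) fun a _ => ?_
  · simpa [content_eq_expnt_iff, Finset.mem_powersetCard] using ha
  · simpa [content_eq_expnt_iff, Finset.mem_powersetCard] using hs
  · funext j
    rcases Fin.exists_fin_two.1 ⟨a j, rfl⟩ with h | h <;> simp [h]
  · simp
  · rw [Finset.prod_filter]
    refine Finset.prod_congr rfl fun j _ => ?_
    rcases Fin.exists_fin_two.1 ⟨a j, rfl⟩ with h | h <;> simp [h]

end Words

theorem isWeightedHomogeneous_aeval_of_isHomogeneous {k σ τ P : Type*} [CommSemiring k]
    [AddCommMonoid P] {w : τ → P} {e : P} {f : σ → MvPolynomial τ k}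
    (hf : ∀ i, IsWeightedHomogeneous w (f i) e) {p : MvPolynomial σ k} {n : ℕ}
    (hp : p.IsHomogeneous n) : IsWeightedHomogeneous w (aeval f p) (n • e) := by
  rw [aeval_def, eval₂_eq]
  refine IsWeightedHomogeneous.sum _ _ _ fun d hd => ?_
  have hdeg : ∑ i ∈ d.support, d i • e = n • e := by
    rw [← Finset.sum_smul, ← Finsupp.degree_apply,
      not_imp_comm.1 hp.coeff_eq_zero (MvPolynomial.mem_support_iff.1 hd)]
  rw [← hdeg, algebraMap_eq]
  exact (IsWeightedHomogeneous.prod _ _ _ fun i _ => (hf i).pow (d i)).C_mul _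

variable {k : Type} {m n : ℕ} [Field k]

theorem symLift_monp {A : Type*} [CommRing A] [Algebra k A] (f : Fin m → Fin 2 → A)
    (i : Fin (m + 1)) :
    symLift f (monp m i : MvPolynomial (Fin 2) k) =
      (Fintype.card {a : Fin m → Fin 2 // content a = expnt m i} : k)⁻¹ •
        ∑ a : {a : Fin m → Fin 2 // content a = expnt m i}, ∏ j, f j (a.1 j) := by
  rw [symLift_apply, tensorLift_apply, Finset.smul_sum,
    ← Finset.sum_subtype {a | content a = expnt m i} (by simp) fun a : Fin m → Fin 2 =>
      (Fintype.card {a : Fin m → Fin 2 // content a = expnt m i} : k)⁻¹ • ∏ j, f j (a j),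
    Finset.sum_filter]
  refine Finset.sum_congr rfl fun a _ => ?_
  rw [symTensor_apply, monp, coeff_monomial]
  by_cases h : content a = expnt m i
  · simp [h]
  · simp [h, Ne.symm h]

/-- The algebra map from the symmetric algebra of `S^m(V)` to polynomial functions of `m` points
that polarizes the binary forms of degree `m`; on `S^n(S^m(V))` it is Hermite's map. -/
def hermiteHom (k : Type) [Field k] (m : ℕ) :
    MvPolynomial (Fin (m + 1)) k →ₐ[k] MvPolynomial (Fin m × Fin 2) k :=
  aeval fun i => symLift (fun j u => X (j, u)) (monp m i : MvPolynomial (Fin 2) k)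

theorem hermiteHom_X (i : Fin (m + 1)) :
    hermiteHom k m (X i) =
      symLift (fun j u => X (j, u)) (monp m i : MvPolynomial (Fin 2) k) :=
  aeval_X _ _

theorem pointsDerivation_hermiteHom [CharZero k] (M : Matrix (Fin 2) (Fin 2) k)
    (p : MvPolynomial (Fin (m + 1)) k) :
    pointsDerivation m M (hermiteHom k m p) = hermiteHom k m (polyAct (matSym m M) p) := by
  refine derivation_map_eq_map_polyAct _ _ _ (fun i => ?_) p
  simp only [hermiteHom_X]
  rw [← symLift_polyAct _ (pointsDerivation_X M) (isHomogeneous_monp i), polyAct_monp]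
  simp only [map_sum, map_smul]

theorem permutePoints_hermiteHom (σ : Equiv.Perm (Fin m)) (p : MvPolynomial (Fin (m + 1)) k) :
    permutePoints k σ (hermiteHom k m p) = hermiteHom k m p := by
  have h : (permutePoints k σ).comp (hermiteHom k m) = hermiteHom k m := algHom_ext fun i => by
    rw [AlgHom.comp_apply, hermiteHom_X, map_symLift _ (permutePoints_X σ)]
  exact DFunLike.congr_fun h p

theorem isMultihomogeneous_hermiteHom {p : MvPolynomial (Fin (m + 1)) k}
    (hp : p.IsHomogeneous n) : IsMultihomogeneous (hermiteHom k m p) n := by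
  have image_X (i : Fin (m + 1)) : IsMultihomogeneous
      (symLift (fun (j : Fin m) u => X (j, u)) (monp m i : MvPolynomial (Fin 2) k)) 1 :=
    isMultihomogeneous_tensorLift (fun j u => isWeightedHomogeneous_X k _ (j, u)) _
  have h := isWeightedHomogeneous_aeval_of_isHomogeneous image_X hp
  rwa [show n • (fun _ => 1 : Fin m → ℕ) = fun _ => n from funext fun _ => mul_one n] at h

theorem eq_zero_of_hermiteHom_eq_zero [CharZero k] {p : MvPolynomial (Fin (m + 1)) k}
    (hp : p.IsHomogeneous n) (h : hermiteHom k m p = 0) : p = 0 := by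
  -- Putting the `m` points on the affine line `X₁ = 1` turns polarizations into elementary
  -- symmetric polynomials, which are algebraically independent.
  let s : MvPolynomial (Fin m × Fin 2) k →ₐ[k] MvPolynomial (Fin m) k :=
    aeval fun z => (![X z.1, 1] : Fin 2 → _) z.2
  let r (i : Fin (m + 1)) : k :=
    (Fintype.card {a : Fin m → Fin 2 // content a = expnt m i} : k)⁻¹
  have r_ne_zero (i : Fin (m + 1)) : r i ≠ 0 := by
    obtain ⟨a, ha⟩ := exists_content_eq (degree_expnt i)
    simpa only [r, ← ha] using inv_ne_zero (card_content_ne_zero a)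
  have cons_esymm (i : Fin (m + 1)) :
      (Fin.cons 1 fun l : Fin m => esymm (Fin m) k (l + 1) : Fin (m + 1) → _) i =
        esymm (Fin m) k i := by
    cases i using Fin.cases <;> simp
  have hs (i : Fin (m + 1)) :
      s (symLift (fun j u => X (j, u)) (monp m i : MvPolynomial (Fin 2) k)) =
        r i • esymm (Fin m) k i := by
    simp only [symLift_monp, map_smul, map_sum, map_prod, s, aeval_X, sum_prod_cons_X_one, r]
  refine eq_zero_of_aeval_smul_cons_eq_zero (algebraicIndependent_esymm_succ k m) r_ne_zero hp ?_
  simp only [cons_esymm, ← hs]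
  rw [← comp_aeval_apply, ← hermiteHom, h, map_zero]

end Hermite

section Vandermonde

variable {k : Type*} [Field k]

theorem sum_card_Ioi_eq_choose_two (m : ℕ) :
    ∑ i : Fin m, (Finset.Ioi i).card = m.choose 2 := by
  simp only [Fin.card_Ioi]
  rw [Fin.sum_univ_eq_sum_range (fun i => m - 1 - i), Finset.sum_range_reflect (fun i => i),
    Finset.sum_range_id, Nat.choose_two_right]

/-- The homogeneous Vandermonde determinant of `m` points of the plane. -/
def pointsVandermonde (k : Type*) [Field k] (m : ℕ) : MvPolynomial (Fin m × Fin 2) k :=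
  (Matrix.projVandermonde (fun j : Fin m => X (j, 0)) fun j => X (j, 1)).det

theorem pointsVandermonde_eq_prod (m : ℕ) :
    pointsVandermonde k m =
      ∏ i : Fin m, ∏ j ∈ Finset.Ioi i, (X (j, 0) * X (i, 1) - X (i, 0) * X (j, 1)) :=
  Matrix.det_projVandermonde _ _

theorem pointsVandermonde_ne_zero (m : ℕ) : pointsVandermonde k m ≠ 0 := by
  rw [pointsVandermonde_eq_prod]
  refine Finset.prod_ne_zero_iff.2 fun i _ => Finset.prod_ne_zero_iff.2 fun j hj h => ?_
  have hij : j ≠ i := (Finset.mem_Ioi.1 hj).ne'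
  simpa [hij] using congrArg
    (aeval fun z : Fin m × Fin 2 => if z = (j, 0) ∨ z = (i, 1) then (1 : k) else 0) h

theorem isMultihomogeneous_pointsVandermonde (m : ℕ) :
    IsMultihomogeneous (pointsVandermonde k m) (m - 1) := by
  have entry (i j : Fin m) : IsWeightedHomogeneous (fun z => (Pi.single z.1 1 : Fin m → ℕ))
      (Matrix.projVandermonde (fun j : Fin m => (X (j, 0) : MvPolynomial (Fin m × Fin 2) k))
        (fun j => X (j, 1)) i j) (Pi.single i (m - 1)) := by
    have h := ((isWeightedHomogeneous_X k (fun z : Fin m × Fin 2 => (Pi.single z.1 1 : Fin m → ℕ))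
      (i, 0)).pow j).mul ((isWeightedHomogeneous_X k _ (i, 1)).pow j.rev)
    rw [Matrix.projVandermonde_apply]
    rwa [← add_smul, Fin.val_rev, show (j : ℕ) + (m - (j + 1)) = m - 1 by omega, ← Pi.single_smul,
      smul_eq_mul, mul_one] at h
  rw [pointsVandermonde, ← Matrix.det_transpose, Matrix.det_apply]
  refine IsWeightedHomogeneous.sum _ _ _ fun σ _ => ?_
  rw [Units.smul_def, ← Int.cast_smul_eq_zsmul k, smul_eq_C_mul]
  have h := IsWeightedHomogeneous.prod Finset.univ _ _ fun i _ => entry i (σ i)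
  rw [Finset.univ_sum_single fun _ : Fin m => m - 1] at h
  exact h.C_mul _

theorem permutePoints_pointsVandermonde {m : ℕ} (σ : Equiv.Perm (Fin m)) :
    permutePoints k σ (pointsVandermonde k m) =
      Equiv.Perm.sign σ • pointsVandermonde k m := by
  rw [pointsVandermonde, AlgHom.map_det, Units.smul_def, zsmul_eq_mul, ← Matrix.det_permute]
  congr 1
  ext1 i j
  simp [Matrix.projVandermonde_apply, permutePoints_X]

theorem pointsDerivation_pointsVandermonde (m : ℕ) (M : Matrix (Fin 2) (Fin 2) k) :
    pointsDerivation m M (pointsVandermonde k m) =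
      ((m.choose 2 : k) * M.trace) • pointsVandermonde k m := by
  have factor (i j : Fin m) : pointsDerivation m M (X (j, 0) * X (i, 1) - X (i, 0) * X (j, 1)) =
      M.trace • (X (j, 0) * X (i, 1) - X (i, 0) * X (j, 1)) := by
    simp only [map_sub, Derivation.leibniz, pointsDerivation_X, Fin.sum_univ_two, smul_eq_C_mul,
      smul_eq_mul, Matrix.trace_fin_two, map_add]
    ring
  rw [pointsVandermonde_eq_prod,
    derivation_prod_eq_smul _ _ fun i _ => derivation_prod_eq_smul _ _ fun j _ => factor i j]
  simp only [Finset.sum_const, nsmul_eq_mul]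
  rw [← Finset.sum_mul, ← Nat.cast_sum, sum_card_Ioi_eq_choose_two]

end Vandermonde

section Equivalences

theorem exists_linearEquiv_of_range_le_range {k E F R : Type*} [Field k] [AddCommGroup E]
    [Module k E] [Module.Finite k E] [AddCommGroup F] [Module k F] [Module.Finite k F]
    [AddCommGroup R] [Module k R] {f : E →ₗ[k] R} {g : F →ₗ[k] R} (hf : Function.Injective f)
    (hle : LinearMap.range f ≤ LinearMap.range g) (hrank : finrank k E = finrank k F) :
    ∃ e : E ≃ₗ[k] F, ∀ x, g (e x) = f x := by
  obtain ⟨h, hh⟩ := Module.projective_lifting_property g.rangeRestrict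
    (f.codRestrict _ fun x => hle ⟨x, rfl⟩) g.surjective_rangeRestrict
  have hgh (x : E) : g (h x) = f x := congrArg Subtype.val (DFunLike.congr_fun hh x)
  have h_injective : Function.Injective h := fun x y hxy => hf (by rw [← hgh, hxy, hgh])
  exact ⟨h.linearEquivOfInjective h_injective hrank, hgh⟩

theorem finrank_homogeneousSubmodule_fin_succ (k : Type*) [Field k] (m n : ℕ) :
    finrank k (homogeneousSubmodule (Fin (m + 1)) k n) = (n + m).choose n := by
  have h : homogeneousSubmodule (Fin (m + 1)) k n = restrictSupport k {d | d.degree = n} :=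
    homogeneousSubmodule_eq_finsupp_supported (Fin (m + 1)) k n
  have e : Sym (Fin (m + 1)) n ≃ ({d | d.degree = n} : Set (Fin (m + 1) →₀ ℕ)) :=
    Sym.equivNatSum (Fin (m + 1)) n
  rw [h, Module.finrank_eq_nat_card_basis (basisRestrictSupport k _), ← Nat.card_congr e,
    Sym.natCard_sym_eq_choose, Nat.card_fin, add_right_comm, Nat.add_sub_cancel, add_comm]

instance finite_homogeneousSubmodule (σ k : Type*) [Finite σ] [Field k] (n : ℕ) :
    Module.Finite k (homogeneousSubmodule σ k n) :=
  Module.Finite.iff_fg.2 (homogeneousSubmodule_fg _ _ _)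

variable (k : Type) [Field k] [CharZero k]

theorem exists_homogeneousSubmodule_equiv_swap (m n : ℕ) :
    ∃ φ : homogeneousSubmodule (Fin (m + 1)) k n ≃ₗ[k] homogeneousSubmodule (Fin (n + 1)) k m,
      ∀ (M : Matrix (Fin 2) (Fin 2) k) (p : homogeneousSubmodule (Fin (m + 1)) k n),
        (φ ⟨polyAct (matSym m M) p, isHomogeneous_polyAct _ p.2⟩ : MvPolynomial (Fin (n + 1)) k) =
          polyAct (matSym n M) (φ p : MvPolynomial (Fin (n + 1)) k) := by
  let f := (hermiteHom k m).toLinearMap.domRestrict (homogeneousSubmodule (Fin (m + 1)) k n)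
  let g := (symLift (blockMonomial n) : _ →ₗ[k] MvPolynomial (Fin m × Fin 2) k).domRestrict
    (homogeneousSubmodule (Fin (n + 1)) k m)
  have f_injective : Function.Injective f :=
    (injective_iff_map_eq_zero f).2 fun p hp => Subtype.ext (eq_zero_of_hermiteHom_eq_zero p.2 hp)
  have range_le : LinearMap.range f ≤ LinearMap.range g := by
    rintro _ ⟨p, rfl⟩
    obtain ⟨q, hq, h⟩ := exists_symLift_blockMonomial_eq (isMultihomogeneous_hermiteHom p.2)
      fun σ => permutePoints_hermiteHom σ (p : MvPolynomial (Fin (m + 1)) k)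
    exact ⟨⟨q, hq⟩, h⟩
  obtain ⟨φ, hφ⟩ := exists_linearEquiv_of_range_le_range f_injective range_le (by
    rw [finrank_homogeneousSubmodule_fin_succ, finrank_homogeneousSubmodule_fin_succ, add_comm m,
      Nat.choose_symm_add])
  have symLift_φ (p) : symLift (blockMonomial n) (φ p : MvPolynomial (Fin (n + 1)) k) =
      hermiteHom k m (p : MvPolynomial (Fin (m + 1)) k) := hφ p
  refine ⟨φ, fun M p => symLift_blockMonomial_injOn (φ _).2 (isHomogeneous_polyAct _ (φ p).2) ?_⟩
  rw [symLift_polyAct _ (pointsDerivation_blockMonomial M) (φ p).2, symLift_φ, symLift_φ,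
    pointsDerivation_hermiteHom]

variable {k} in
theorem exists_extLift_eq_pointsVandermonde_mul_symLift {m n N : ℕ} (hN : N + 1 = n + m)
    (p : MvPolynomial (Fin (n + 1)) k) :
    ∃ v : {s : Finset (Fin (N + 1)) // s.card = m} → k,
      extLift (blockMonomial N) v = pointsVandermonde k m * symLift (blockMonomial n) p := by
  refine exists_extLift_blockMonomial_eq ?_ fun σ => ?_
  · have h := (isMultihomogeneous_pointsVandermonde m).mul
      (isMultihomogeneous_tensorLift isWeightedHomogeneous_blockMonomial (symTensor m p))
    have degree_eq : (fun _ : Fin m => m - 1 + n) = fun _ => N := funext fun j => by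
      have := j.pos
      omega
    rwa [IsMultihomogeneous, degree_eq] at h
  · rw [map_mul, permutePoints_pointsVandermonde, map_symLift _ (permutePoints_blockMonomial σ),
      smul_mul_assoc]

variable {k} in
theorem pointsDerivation_pointsVandermonde_mul_symLift {m n : ℕ} (M : Matrix (Fin 2) (Fin 2) k)
    {p : MvPolynomial (Fin (n + 1)) k} (hp : p.IsHomogeneous m) :
    pointsDerivation m M (pointsVandermonde k m * symLift (blockMonomial n) p) =
      pointsVandermonde k m * symLift (blockMonomial n)
        (polyAct (matSym n M) p + ((m.choose 2 : k) * M.trace) • p) := by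
  rw [Derivation.leibniz, pointsDerivation_pointsVandermonde,
    ← symLift_polyAct _ (pointsDerivation_blockMonomial M) hp, map_add, map_smul, smul_eq_mul,
    smul_eq_mul, mul_add, mul_smul_comm, mul_smul_comm, mul_comm (symLift _ p)]

theorem exists_homogeneousSubmodule_equiv_exterior {m n N : ℕ} (hN : N + 1 = n + m) :
    ∃ e : homogeneousSubmodule (Fin (n + 1)) k m ≃ₗ[k]
        ({s : Finset (Fin (N + 1)) // s.card = m} → k),
      ∀ (M : Matrix (Fin 2) (Fin 2) k) v,
        (e.symm ((Matrix.of (extMat m (matSym N M))).mulVec v) : MvPolynomial (Fin (n + 1)) k) =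
          polyAct (matSym n M) (e.symm v : MvPolynomial (Fin (n + 1)) k) +
            ((m.choose 2 : k) * M.trace) • (e.symm v : MvPolynomial (Fin (n + 1)) k) := by
  let f := (LinearMap.mulLeft k (pointsVandermonde k m) ∘ₗ symLift (blockMonomial n)).domRestrict
    (homogeneousSubmodule (Fin (n + 1)) k m)
  let g : _ →ₗ[k] MvPolynomial (Fin m × Fin 2) k := extLift (blockMonomial N)
  have f_injective : Function.Injective f := fun p q hpq => Subtype.ext
    (symLift_blockMonomial_injOn p.2 q.2 (mul_left_cancel₀ (pointsVandermonde_ne_zero m) hpq))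
  have range_le : LinearMap.range f ≤ LinearMap.range g := by
    rintro _ ⟨p, rfl⟩
    obtain ⟨v, hv⟩ := exists_extLift_eq_pointsVandermonde_mul_symLift hN
      (p : MvPolynomial (Fin (n + 1)) k)
    exact ⟨v, hv⟩
  obtain ⟨e, he⟩ := exists_linearEquiv_of_range_le_range f_injective range_le (by
    rw [finrank_homogeneousSubmodule_fin_succ, Module.finrank_fintype_fun_eq_card,
      Fintype.card_finset_len, Fintype.card_fin, hN, add_comm m])
  have hf (v) : f (e.symm v) = g v := by rw [← he, e.apply_symm_apply]
  refine ⟨e, fun M v => congrArg Subtype.val (@f_injective _ ⟨_, ?_⟩ ?_)⟩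
  · exact (isHomogeneous_polyAct _ (e.symm v).2).add
      ((homogeneousSubmodule _ _ _).smul_mem _ (e.symm v).2)
  calc f (e.symm _) = g ((Matrix.of (extMat m (matSym N M))).mulVec v) := hf _
    _ = pointsDerivation m M (g v) := extLift_extMat_mulVec _ (pointsDerivation_blockMonomial M) v
    _ = pointsDerivation m M (f (e.symm v)) := by rw [hf]
    _ = _ := pointsDerivation_pointsVandermonde_mul_symLift M (e.symm v).2

end Equivalences

end HermiteReciprocity

open HermiteReciprocity

theorem hermite_reciprocity_and_exterior_symmetric_general
    (k : Type) {V : Type*} [Field k] [CharZero k] [AddCommGroup V] [Module k V]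
    (b : Basis (Fin 2) k V) {m n N : ℕ} (hN : N + 1 = n + m) :
    (∃ φ : homogeneousSubmodule (Fin (m + 1)) k n ≃ₗ[k] homogeneousSubmodule (Fin (n + 1)) k m,
      ∀ (x : Module.End k V) (p : homogeneousSubmodule (Fin (m + 1)) k n),
        (φ ⟨polyAct (matSym m (LinearMap.toMatrix b b x)) p, isHomogeneous_polyAct _ p.2⟩ :
            MvPolynomial (Fin (n + 1)) k) =
          polyAct (matSym n (LinearMap.toMatrix b b x)) (φ p : MvPolynomial (Fin (n + 1)) k)) ∧
    (∃ ψ : ({s : Finset (Fin (N + 1)) // s.card = m} → k) →ₗ[k] MvPolynomial (Fin (n + 1)) k,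
      Function.Injective ψ ∧
      LinearMap.range ψ = homogeneousSubmodule (Fin (n + 1)) k m ∧
      ∀ (x : Module.End k V) (v : {s : Finset (Fin (N + 1)) // s.card = m} → k),
        ψ ((Matrix.of (extMat m (matSym N (LinearMap.toMatrix b b x)))).mulVec v) =
          polyAct (matSym n (LinearMap.toMatrix b b x)) (ψ v) +
            ((m.choose 2 : k) * LinearMap.trace k V x) • ψ v) := by
  obtain ⟨φ, hφ⟩ := exists_homogeneousSubmodule_equiv_swap k m n
  obtain ⟨e, he⟩ := exists_homogeneousSubmodule_equiv_exterior k hN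
  refine ⟨⟨φ, fun x p => hφ (LinearMap.toMatrix b b x) p⟩,
    (homogeneousSubmodule (Fin (n + 1)) k m).subtype ∘ₗ e.symm.toLinearMap,
    Subtype.val_injective.comp e.symm.injective, ?_, fun x v => ?_⟩
  · rw [LinearMap.range_comp, LinearEquiv.range, Submodule.map_top, Submodule.range_subtype]
  · rw [LinearMap.trace_eq_matrix_trace k b x]
    exact he (LinearMap.toMatrix b b x) v

theorem hermite_reciprocity_and_exterior_symmetric
    (k V : Type) [Field k] [IsAlgClosed k] [CharZero k]
    [AddCommGroup V] [Module k V] [FiniteDimensional k V]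
    (hdim : finrank k V = 2) (b : Basis (Fin 2) k V)
    (m n : ℕ) (hm : 0 < m) (hn : 0 < n) :
    -- Hermite reciprocity: S^n(S^m(V)) ≅ S^m(S^n(V)) as sl(V)-modules.
    -- S^n(S^m V) is modelled as the space of homogeneous polynomials of degree
    -- n in m+1 variables (= dim S^m V), with x ∈ sl(V) acting through the
    -- derivation action of the matrix of its action on S^m V, and similarly
    -- for S^m(S^n V).
    (∃ φ : (homogeneousSubmodule (Fin (m + 1)) k n) ≃ₗ[k]
        (homogeneousSubmodule (Fin (n + 1)) k m),
      ∀ (x : Module.End k V), LinearMap.trace k V x = 0 →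
        ∀ (p : homogeneousSubmodule (Fin (m + 1)) k n)
          (hq : polyAct (matSym m (LinearMap.toMatrix b b x)) (p : MvPolynomial (Fin (m+1)) k)
              ∈ homogeneousSubmodule (Fin (m + 1)) k n),
          (φ ⟨polyAct (matSym m (LinearMap.toMatrix b b x)) (p : MvPolynomial (Fin (m+1)) k), hq⟩ :
              MvPolynomial (Fin (n + 1)) k) =
            polyAct (matSym n (LinearMap.toMatrix b b x))
              ((φ p : homogeneousSubmodule (Fin (n+1)) k m) : MvPolynomial (Fin (n + 1)) k)) ∧
    -- Λ^m(S^{n+m−1}(V)) ≅ S^m(S^n(V)) as sl(V)-modules.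
    -- Λ^m(S^{n+m−1} V) is modelled on the free space on the m-element subsets
    -- of a basis of S^{n+m−1}(V) (a space of dimension n+m = (n+m−1)+1),
    -- with x ∈ sl(V) acting by the derivative of the minor action.
    (∃ ψ : ({s : Finset (Fin (n + m - 1 + 1)) // s.card = m} → k) →ₗ[k]
        MvPolynomial (Fin (n + 1)) k,
      Function.Injective ψ ∧
      LinearMap.range ψ = homogeneousSubmodule (Fin (n + 1)) k m ∧
      ∀ (x : Module.End k V), LinearMap.trace k V x = 0 →
        ∀ v : {s : Finset (Fin (n + m - 1 + 1)) // s.card = m} → k,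
          ψ ((Matrix.mulVecLin (Matrix.of
              (extMat m (matSym (n + m - 1) (LinearMap.toMatrix b b x))))) v) =
            polyAct (matSym n (LinearMap.toMatrix b b x)) (ψ v)) := by
  obtain ⟨⟨φ, hφ⟩, ψ, hinj, hrange, hψ⟩ :=
    hermite_reciprocity_and_exterior_symmetric_general k b (m := m) (n := n) (N := n + m - 1)
      (by omega)
  refine ⟨⟨φ, fun x _ p _ => hφ x p⟩, ψ, hinj, hrange, fun x hx v => (hψ x v).trans ?_⟩
  rw [hx, mul_zero, zero_smul, add_zero]
end
end

section
/- Suppose λ is a minuscule dominant weight. Then D_λ(q) = t_0(q)/t_λ(q) = ∏_{i=1}^l (1 − q^{d_i})/(1 − q^{d_i(W_λ)}), where d_1,…,d_l are the degrees of the basic invariants of W and d_1(W_λ),…,d_l(W_λ) those of the stabilizer W_λ. -/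
/-!
STATEMENT 12: If λ is a minuscule dominant weight, then
  D_λ(q) = t_0(q)/t_λ(q) = ∏_{i=1}^l (1 − q^{d_i}) / (1 − q^{d_i(W_λ)}),
where d_1, …, d_l are the degrees of the basic invariants of the Weyl group W
and d_1(W_λ), …, d_l(W_λ) those of the stabilizer W_λ of λ.

Encoding: the root system is encoded combinatorially as in the other
statements of this series.  The Dynkin polynomial D_λ is encoded through its
coefficients via Kostant's multiplicity formula; t_μ(q) = Σ_{w ∈ W_μ} q^{ℓ(w)}
(`tpoly`) where ℓ(w) = #{α ∈ Δ+ : wα ∈ −Δ+} is the length function, so that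
t_0(q) corresponds to W itself (every linear map fixes 0).  The degrees
d_i resp. d_i(W_λ) of the basic invariants (l = dim E = rk g of them) are
characterized, as in the paper (Eq. (3.2), after Solomon), by the identities
t_0(q)(1−q)^l = ∏ (1−q^{d_i}) and t_λ(q)(1−q)^l = ∏ (1−q^{d_i(W_λ)}).  Both
asserted equalities are stated denominator-free.
-/


noncomputable section

namespace RootCW

open Polynomial

variable {E : Type} [AddCommGroup E] [Module ℚ E]

/-- The coroot pairing ⟨v, α∨⟩ = 2(v,α)/(α,α) determined by the invariant
form B. -/
def cpair (B : E →ₗ[ℚ] E →ₗ[ℚ] ℚ) (a : E) (v : E) : ℚ :=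
  2 * B v a / B a a

/-- The reflection in the root `a` (as a linear map): v ↦ v − ⟨v,a∨⟩a. -/
def reflMap (B : E →ₗ[ℚ] E →ₗ[ℚ] ℚ) (a : E) : E →ₗ[ℚ] E :=
  LinearMap.id - (2 / B a a) • ((B.flip a).smulRight a)

lemma reflMap_apply (B : E →ₗ[ℚ] E →ₗ[ℚ] ℚ) (a v : E) :
    reflMap B a v = v - (cpair B a v) • a := by
  simp only [reflMap, cpair, LinearMap.sub_apply, LinearMap.id_apply,
    LinearMap.smul_apply, LinearMap.smulRight_apply, LinearMap.flip_apply,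
    smul_smul]
  ring_nf

lemma reflMap_involutive (B : E →ₗ[ℚ] E →ₗ[ℚ] ℚ) (a : E) (ha : B a a ≠ 0) :
    Function.Involutive (reflMap B a) := by
  intro v
  rw [reflMap_apply, reflMap_apply]
  have hBa : cpair B a (v - cpair B a v • a) = - cpair B a v := by
    simp only [cpair, map_sub, map_smul, LinearMap.sub_apply, LinearMap.smul_apply,
      smul_eq_mul]
    field_simp
    ring
  rw [hBa, neg_smul, sub_neg_eq_add, sub_add_cancel]

/-- The reflection in the root `a`, as a linear automorphism of E. -/
def refl (B : E →ₗ[ℚ] E →ₗ[ℚ] ℚ) (a : E) (ha : B a a ≠ 0) : E ≃ₗ[ℚ] E :=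
  LinearEquiv.ofInvolutive (reflMap B a) (reflMap_involutive B a ha)

variable {ι : Type} [Fintype ι]

/-- The Weyl group: the subgroup of GL(E) generated by the reflections in the
(positive) roots `α i`. -/
def weylGroup (B : E →ₗ[ℚ] E →ₗ[ℚ] ℚ) (α : ι → E)
    (hne : ∀ i, B (α i) (α i) ≠ 0) : Subgroup (E ≃ₗ[ℚ] E) :=
  Subgroup.closure (Set.range fun i => refl B (α i) (hne i))

/-- Kostant's partition function: the number of ways of writing `v` as a sum of
positive roots. -/
def kostant (α : ι → E) (v : E) : ℕ :=
  Nat.card {f : ι → ℕ // ∑ i, (f i) • α i = v}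

/-- ρ, the half sum of the positive roots. -/
def rho (α : ι → E) : E := (2⁻¹ : ℚ) • ∑ i, α i

/-- The weight multiplicity m_λ^μ of the weight μ in the simple module of
highest weight λ, given by Kostant's multiplicity formula. -/
def wtMult (B : E →ₗ[ℚ] E →ₗ[ℚ] ℚ) (α : ι → E)
    (hne : ∀ i, B (α i) (α i) ≠ 0) (lam mu : E) : ℚ :=
  ∑ᶠ w : weylGroup B α hne,
    (LinearMap.det ((w : E ≃ₗ[ℚ] E) : E →ₗ[ℚ] E)) *
      (kostant α ((w : E ≃ₗ[ℚ] E) (lam + rho α) - mu - rho α) : ℚ)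

/-- The q-analogue P_q of Kostant's partition function, defined by
∏_{α ∈ Δ+} 1/(1 − q e^α) = Σ_ν P_q(ν) e^ν. -/
def kostantq (α : ι → E) (v : E) : Polynomial ℚ :=
  ∑ᶠ f ∈ {f : ι → ℕ | ∑ i, (f i) • α i = v}, (X : Polynomial ℚ) ^ (∑ i, f i)

/-- Lusztig's q-analogue m_λ^μ(q) = Σ_{w ∈ W} det(w) P_q(w(λ+ρ) − μ − ρ) of the
weight multiplicity. -/
def wtMultq (B : E →ₗ[ℚ] E →ₗ[ℚ] ℚ) (α : ι → E)
    (hne : ∀ i, B (α i) (α i) ≠ 0) (lam mu : E) : Polynomial ℚ :=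
  ∑ᶠ w : weylGroup B α hne,
    (LinearMap.det ((w : E ≃ₗ[ℚ] E) : E →ₗ[ℚ] E)) •
      kostantq α ((w : E ≃ₗ[ℚ] E) (lam + rho α) - mu - rho α)

/-- The height function ht(ν) = (ν, ρ∨) = ½ Σ_{α ∈ Δ+} ⟨ν, α∨⟩. -/
def htq (B : E →ₗ[ℚ] E →ₗ[ℚ] ℚ) (α : ι → E) (v : E) : ℚ :=
  (∑ i, cpair B (α i) v) / 2

/-- A dominant weight: one pairing nonnegatively with every positive coroot. -/
def IsDominant (B : E →ₗ[ℚ] E →ₗ[ℚ] ℚ) (α : ι → E) (v : E) : Prop :=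
  ∀ i, 0 ≤ cpair B (α i) v

/-- The length of a Weyl group element: the number of positive roots made
negative. -/
def len (α : ι → E) (w : E ≃ₗ[ℚ] E) : ℕ :=
  Nat.card {i : ι // ∃ j, w (α i) = - α j}

/-- The Poincaré polynomial t_μ(q) = Σ_{w ∈ W_μ} q^{ℓ(w)} of the stabilizer
W_μ of μ in W; for μ = 0 this is t_0(q) = Σ_{w ∈ W} q^{ℓ(w)}. -/
def tpoly (B : E →ₗ[ℚ] E →ₗ[ℚ] ℚ) (α : ι → E)
    (hne : ∀ i, B (α i) (α i) ≠ 0) (mu : E) : Polynomial ℚ :=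
  ∑ᶠ w ∈ {w : weylGroup B α hne | (w : E ≃ₗ[ℚ] E) mu = mu},
    (X : Polynomial ℚ) ^ (len α (w : E ≃ₗ[ℚ] E))

end RootCW

open RootCW Polynomial Module

/-!
Kostant's formula says that the formal character `χ = ∑ m_λ^μ e^μ`, multiplied by the Weyl
denominator `e^ρ ∏ (1 - e^{-α})`, is the alternating sum `∑ det(w) e^{w(λ + ρ)}`. For finitely many
weights this forces the root system to be reduced, hence `χ` to be invariant under `W`; so for
minuscule `λ` every weight in the orbit `W λ` has multiplicity one.

The exponents of the alternating sum all have the same norm, and so do those of the denominator and,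
for minuscule `λ`, those of `χ`. Comparing the Laplacian of the product with those of the factors
gives Freudenthal's identity, which would make `λ - α` a weight if `⟨λ, α∨⟩ ≥ 2`. Hence
`⟨λ, α∨⟩ ∈ {0, 1}` for every positive root `α`.

Every `μ ∈ W λ` is `u λ` for some `u` inverting no positive root orthogonal to `λ`. As
`ht λ - ht (u λ)` is the sum of `⟨λ, α∨⟩` over the roots `α` inverted by `u`, it equals `ℓ(u)`. The
longest element `w₀` negates heights, so `D_λ(q) = ∑ q^{ℓ(u)}`, and multiplying by `t_λ` gives `t_0`
because `ℓ(u x) = ℓ(u) + ℓ(x)` for `x` in the stabilizer of `λ`.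
-/

lemma derivation_prod_eq_mul_sum {S A κ : Type*} [CommSemiring S] [CommSemiring A]
    [Algebra S A] (δ : Derivation S A A) {s : Finset κ} {f g : κ → A}
    (h : ∀ k ∈ s, δ (f k) = f k * g k) : δ (∏ k ∈ s, f k) = (∏ k ∈ s, f k) * ∑ k ∈ s, g k := by
  classical
  induction s using Finset.induction_on with
  | empty => simp
  | insert k s hk ih =>
    rw [Finset.prod_insert hk, Finset.sum_insert hk, Derivation.leibniz,
      ih fun j hj => h j (Finset.mem_insert_of_mem hj), h k (Finset.mem_insert_self k s),
      smul_eq_mul, smul_eq_mul]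
    ring

/-- The group algebra `ℚ[M]`, in which characters and the Weyl denominator live. -/
abbrev WeightAlgebra (M : Type*) [AddCommGroup M] := AddMonoidAlgebra ℚ M

namespace WeightAlgebra

variable {M : Type*} [AddCommGroup M]

/-- The formal exponential `e^v`. -/
def exp (v : M) : WeightAlgebra M := AddMonoidAlgebra.single v 1

lemma exp_zero : exp (0 : M) = 1 := rfl

lemma exp_ne_zero (v : M) : exp v ≠ 0 := AddMonoidAlgebra.single_ne_zero.2 one_ne_zero

lemma exp_add (u v : M) : exp (u + v) = exp u * exp v := by
  simp only [exp, AddMonoidAlgebra.single_mul_single, mul_one]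

lemma coeff_exp [DecidableEq M] (u v : M) : (exp u).coeff v = if u = v then 1 else 0 := by
  simp [exp, Finsupp.single_apply]

lemma coeff_exp_mul (u v : M) (x : WeightAlgebra M) : (exp u * x).coeff v = x.coeff (v - u) := by
  rw [exp, AddMonoidAlgebra.coeff_single_mul_apply, one_mul, neg_add_eq_sub]

lemma coeff_sum_smul_exp [DecidableEq M] {κ : Type*} (s : Finset κ) (c : κ → ℚ) (g : κ → M)
    (v : M) : (∑ k ∈ s, c k • exp (g k)).coeff v = ∑ k ∈ s, if g k = v then c k else 0 := by
  simp only [AddMonoidAlgebra.coeff_sum, Finsupp.finsetSum_apply, AddMonoidAlgebra.coeff_smul,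
    Finsupp.smul_apply, coeff_exp, smul_eq_mul, mul_ite, mul_one, mul_zero]

@[elab_as_elim]
lemma induction_exp {p : WeightAlgebra M → Prop} (x : WeightAlgebra M) (exp : ∀ v, p (exp v))
    (add : ∀ x y, p x → p y → p (x + y)) (smul : ∀ (c : ℚ) x, p x → p (c • x)) : p x := by
  refine AddMonoidAlgebra.induction_linear x ?_ add fun v c => ?_
  · simpa only [zero_smul] using smul 0 _ (exp 0)
  · simpa only [WeightAlgebra.exp, AddMonoidAlgebra.smul_single, smul_eq_mul, mul_one] using
      smul c _ (exp v)

/-- The factor `1 - e^{-a}` of the Weyl denominator. -/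
def rootFactor (a : M) : WeightAlgebra M := 1 - exp (-a)

lemma coeff_rootFactor_mul (a : M) (x : WeightAlgebra M) (v : M) :
    (rootFactor a * x).coeff v = x.coeff v - x.coeff (v + a) := by
  rw [rootFactor, sub_mul, one_mul, AddMonoidAlgebra.coeff_sub, Finsupp.sub_apply, coeff_exp_mul,
    sub_neg_eq_add]

lemma rootFactor_ne_zero {a : M} (ha : a ≠ 0) : rootFactor a ≠ 0 := by
  classical
  intro h
  have := congrArg (fun x : WeightAlgebra M => x.coeff 0) h
  simp [rootFactor, ← exp_zero, AddMonoidAlgebra.coeff_sub, coeff_exp, ha] at this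

lemma rootFactor_neg (a : M) : rootFactor (-a) = -(exp a * rootFactor a) := by
  rw [rootFactor, rootFactor, neg_neg, mul_sub, mul_one, ← exp_add, add_neg_cancel, exp_zero,
    neg_sub]

lemma rootFactor_mul_exp (a u : M) : rootFactor a * exp u = exp u - exp (u - a) := by
  rw [rootFactor, sub_mul, one_mul, ← exp_add, neg_add_eq_sub]

/-- The algebra automorphism `e^v ↦ e^{w v}`. -/
def act [Module ℚ M] (w : M ≃ₗ[ℚ] M) : WeightAlgebra M ≃ₐ[ℚ] WeightAlgebra M :=
  AddMonoidAlgebra.domCongr ℚ ℚ w.toAddEquiv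

lemma act_exp [Module ℚ M] (w : M ≃ₗ[ℚ] M) (v : M) : act w (exp v) = exp (w v) := by
  simp [act, exp]

lemma act_rootFactor [Module ℚ M] (w : M ≃ₗ[ℚ] M) (a : M) :
    act w (rootFactor a) = rootFactor (w a) := by
  rw [rootFactor, map_sub, map_one, act_exp, map_neg, rootFactor]

lemma coeff_act [Module ℚ M] (w : M ≃ₗ[ℚ] M) (x : WeightAlgebra M) (v : M) :
    (act w x).coeff (w v) = x.coeff v := by
  simp [act]

section LinearExtension

variable {N : Type*} [AddCommGroup N] [Module ℚ N]

/-- The linear map prescribed on the basis of exponentials by `e^v ↦ g v`. -/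
def lift (g : M → N) : WeightAlgebra M →ₗ[ℚ] N :=
  Finsupp.linearCombination ℚ g ∘ₗ (AddMonoidAlgebra.coeffLinearEquiv ℚ).toLinearMap

lemma lift_exp (g : M → N) (v : M) : lift g (exp v) = g v := by
  simp [lift, exp, AddMonoidAlgebra.coeffLinearEquiv]

end LinearExtension

/-- The diagonal operator `e^v ↦ g v • e^v`. -/
def diag (g : M → ℚ) : WeightAlgebra M →ₗ[ℚ] WeightAlgebra M := lift fun v => g v • exp v

lemma diag_exp (g : M → ℚ) (v : M) : diag g (exp v) = g v • exp v := lift_exp _ v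

lemma coeff_diag (g : M → ℚ) (x : WeightAlgebra M) (v : M) :
    (diag g x).coeff v = g v * x.coeff v := by
  classical
  induction x using induction_exp with
  | exp u =>
    rw [diag_exp, AddMonoidAlgebra.coeff_smul, Finsupp.smul_apply, coeff_exp]
    split_ifs with h
    · rw [h, smul_eq_mul]
    · rw [smul_zero, mul_zero]
  | add x y hx hy =>
    rw [map_add, AddMonoidAlgebra.coeff_add, AddMonoidAlgebra.coeff_add, Finsupp.add_apply,
      Finsupp.add_apply, hx, hy, mul_add]
  | smul c x hx =>
    rw [map_smul, AddMonoidAlgebra.coeff_smul, AddMonoidAlgebra.coeff_smul, Finsupp.smul_apply,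
      Finsupp.smul_apply, hx, mul_smul_comm]

lemma diag_eq_smul {g : M → ℚ} {c : ℚ} {x : WeightAlgebra M} (h : ∀ v, x.coeff v ≠ 0 → g v = c) :
    diag g x = c • x := by
  ext v
  rw [coeff_diag, AddMonoidAlgebra.coeff_smul, Finsupp.smul_apply, smul_eq_mul]
  by_cases hv : x.coeff v = 0
  · rw [hv, mul_zero, mul_zero]
  · rw [h v hv]

section LineMoment

variable [Module ℚ M]

open scoped Classical in
/-- The first moment, with respect to `ℓ`, of the part of an element of `ℚ[M]` supported on the
line `v + ℚ a`. It detects whether an element vanishes to order two along `e^a = 1`. -/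
def lineMoment (ℓ : M →ₗ[ℚ] ℚ) (a v : M) : WeightAlgebra M →ₗ[ℚ] ℚ :=
  lift fun u => if u - v ∈ ℚ ∙ a then ℓ u else 0

variable {ℓ : M →ₗ[ℚ] ℚ} {a v : M}

lemma lineMoment_exp_of_mem {u : M} (h : u - v ∈ ℚ ∙ a) : lineMoment ℓ a v (exp u) = ℓ u := by
  rw [lineMoment, lift_exp, if_pos h]

lemma lineMoment_exp_of_notMem {u : M} (h : u - v ∉ ℚ ∙ a) : lineMoment ℓ a v (exp u) = 0 := by
  rw [lineMoment, lift_exp, if_neg h]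

open scoped Classical in
lemma lineMoment_rootFactor_mul_exp {b : M} (hb : b ∈ ℚ ∙ a) (u : M) :
    lineMoment ℓ a v (rootFactor b * exp u) = if u - v ∈ ℚ ∙ a then ℓ b else 0 := by
  have hshift : u - b - v ∈ ℚ ∙ a ↔ u - v ∈ ℚ ∙ a := by
    rw [sub_right_comm, Submodule.sub_mem_iff_left _ hb]
  rw [rootFactor_mul_exp, map_sub]
  split_ifs with h
  · rw [lineMoment_exp_of_mem h, lineMoment_exp_of_mem (hshift.2 h), map_sub, sub_sub_cancel]
  · rw [lineMoment_exp_of_notMem h, lineMoment_exp_of_notMem (hshift.not.2 h), sub_zero]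

lemma lineMoment_rootFactor_mul_rootFactor_mul {b : M} (hb : b ∈ ℚ ∙ a) (x : WeightAlgebra M) :
    lineMoment ℓ a v (rootFactor a * rootFactor b * x) = 0 := by
  classical
  induction x using induction_exp with
  | exp u =>
    have ha : a ∈ ℚ ∙ a := Submodule.mem_span_singleton_self a
    rw [mul_right_comm, rootFactor_mul_exp, sub_mul, mul_comm, mul_comm _ (rootFactor b), map_sub,
      lineMoment_rootFactor_mul_exp hb, lineMoment_rootFactor_mul_exp hb, sub_right_comm,
      Submodule.sub_mem_iff_left _ ha, sub_self]
  | add x y hx hy => rw [mul_add, map_add, hx, hy, add_zero]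
  | smul c x hx => rw [mul_smul_comm, map_smul, hx, smul_zero]

end LineMoment

end WeightAlgebra

section KostantPartitions

variable {M ι : Type} [AddCommGroup M] [Fintype ι] {α : ι → M}

/-- The expressions of `v` as sums of members of the family `α` with indices in `T`. -/
def kostantPartitions (α : ι → M) (T : Finset ι) (v : M) : Set (ι → ℕ) :=
  {f | (∀ i ∉ T, f i = 0) ∧ ∑ i, f i • α i = v}

lemma kostant_eq_ncard (v : M) : kostant α v = (kostantPartitions α Finset.univ v).ncard := by
  simp only [kostantPartitions, Finset.mem_univ, not_true_eq_false, false_imp_iff, implies_true,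
    true_and]
  rfl

lemma ncard_kostantPartitions_empty [DecidableEq M] (v : M) :
    (kostantPartitions α ∅ v).ncard = if v = 0 then 1 else 0 := by
  have hzero (f : ι → ℕ) (hf : ∀ i ∉ (∅ : Finset ι), f i = 0) : f = 0 :=
    funext fun i => hf i (Finset.notMem_empty i)
  split_ifs with hv
  · refine Set.ncard_eq_one.2 ⟨0, Set.eq_singleton_iff_unique_mem.2 ⟨?_, fun f hf => hzero f hf.1⟩⟩
    simp [kostantPartitions, hv]
  · have hempty : kostantPartitions α ∅ v = ∅ :=
      Set.eq_empty_of_forall_notMem fun f hf => hv (by simp [← hf.2, hzero f hf.1])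
    rw [hempty, Set.ncard_empty]

lemma exists_eq_sum_of_kostant_ne_zero {v : M} (h : kostant α v ≠ 0) :
    ∃ f : ι → ℕ, ∑ i, f i • α i = v :=
  let ⟨⟨f, hf⟩⟩ := (Nat.card_ne_zero.1 h).1
  ⟨f, hf⟩

lemma sum_add_single_nsmul [DecidableEq ι] (f : ι → ℕ) (i : ι) :
    ∑ j, (f + Pi.single i 1 : ι → ℕ) j • α j = ∑ j, f j • α j + α i := by
  simp only [Pi.add_apply, add_smul, Finset.sum_add_distrib, Pi.single_apply, ite_smul, one_smul,
    zero_smul, Finset.sum_ite_eq', Finset.mem_univ, if_true]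

lemma kostantPartitions_eq_union [DecidableEq ι] {T : Finset ι} {i : ι} (hi : i ∈ T) (v : M) :
    kostantPartitions α T v = kostantPartitions α (T.erase i) v ∪
      (· + Pi.single i 1) '' kostantPartitions α T (v - α i) := by
  ext f
  constructor
  · rintro ⟨hsupp, hsum⟩
    by_cases hfi : f i = 0
    · refine Or.inl ⟨fun j hj => ?_, hsum⟩
      by_cases hji : j = i
      · rw [hji, hfi]
      · exact hsupp j fun hjT => hj (Finset.mem_erase.2 ⟨hji, hjT⟩)
    · have hf : f - Pi.single i 1 + Pi.single i 1 = f := tsub_add_cancel_of_le fun j => by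
        obtain rfl | hji := eq_or_ne j i
        · simpa using Nat.one_le_iff_ne_zero.2 hfi
        · simp [hji]
      refine Or.inr ⟨f - Pi.single i 1, ⟨fun j hj => by simp [hsupp j hj], ?_⟩, hf⟩
      rw [eq_sub_iff_add_eq, ← sum_add_single_nsmul, hf, hsum]
  · rintro (⟨hsupp, hsum⟩ | ⟨g, ⟨hsupp, hsum⟩, rfl⟩)
    · exact ⟨fun j hj => hsupp j fun hj' => hj (Finset.mem_of_mem_erase hj'), hsum⟩
    · refine ⟨fun j hj => ?_, ?_⟩
      · simp [hsupp j hj, ne_of_mem_of_not_mem hi hj |>.symm]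
      · exact (sum_add_single_nsmul g i).trans (by rw [hsum, sub_add_cancel])

open WeightAlgebra

lemma exists_eq_neg_sum_of_coeff_prod_rootFactor_ne_zero (T : Finset ι) {v : M}
    (hv : (∏ i ∈ T, rootFactor (α i)).coeff v ≠ 0) : ∃ n : ι → ℕ, v = -∑ i, n i • α i := by
  classical
  induction T using Finset.induction_on generalizing v with
  | empty =>
    rw [Finset.prod_empty, ← exp_zero, coeff_exp] at hv
    exact ⟨0, by simpa [eq_comm] using hv⟩
  | insert i T hi ih =>
    rw [Finset.prod_insert hi, coeff_rootFactor_mul] at hv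
    by_cases h : (∏ i ∈ T, rootFactor (α i)).coeff v = 0
    · obtain ⟨n, hn⟩ := ih (v := v + α i) fun h' => hv (by rw [h, h', sub_zero])
      refine ⟨n + Pi.single i 1, ?_⟩
      rw [sum_add_single_nsmul, neg_add, ← hn, add_neg_cancel_right]
    · exact ih h

variable {φ : M →+ ℚ} (hφ : ∀ i, 0 < φ (α i))
include hφ

lemma finite_kostantPartitions (T : Finset ι) (v : M) : (kostantPartitions α T v).Finite := by
  classical
  refine (Set.finite_Icc (0 : ι → ℕ) fun i => ⌈φ v / φ (α i)⌉₊).subset ?_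
  rintro f ⟨-, hf⟩
  refine ⟨fun i => Nat.zero_le _, fun i => ?_⟩
  have hle : f i * φ (α i) ≤ φ v := by
    rw [← hf, map_sum]
    simp only [map_nsmul, nsmul_eq_mul]
    exact Finset.single_le_sum (f := fun j => f j * φ (α j))
      (fun j _ => mul_nonneg (Nat.cast_nonneg _) (hφ j).le) (Finset.mem_univ i)
  exact_mod_cast ((le_div_iff₀ (hφ i)).2 hle).trans (Nat.le_ceil _)

lemma ncard_kostantPartitions_eq_add [DecidableEq ι] {T : Finset ι} {i : ι} (hi : i ∈ T) (v : M) :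
    (kostantPartitions α T v).ncard =
      (kostantPartitions α (T.erase i) v).ncard + (kostantPartitions α T (v - α i)).ncard := by
  rw [kostantPartitions_eq_union hi, Set.ncard_union_eq ?_ (finite_kostantPartitions hφ _ _)
    ((finite_kostantPartitions hφ _ _).image _),
    Set.ncard_image_of_injective _ (add_left_injective _)]
  rw [Set.disjoint_left]
  rintro f ⟨hsupp, -⟩ ⟨g, -, rfl⟩
  simpa using hsupp i (Finset.notMem_erase i T)

lemma kostant_zero : kostant α 0 = 1 := by
  rw [kostant_eq_ncard]
  refine Set.ncard_eq_one.2 ⟨0, Set.eq_singleton_iff_unique_mem.2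
    ⟨by simp [kostantPartitions], fun f hf => funext fun i => ?_⟩⟩
  have hsum : ∑ j, (f j : ℚ) * φ (α j) = 0 := by
    simpa [map_sum] using congrArg φ hf.2
  have := (Finset.sum_eq_zero_iff_of_nonneg
    fun j _ => mul_nonneg (Nat.cast_nonneg _) (hφ j).le).1 hsum i (Finset.mem_univ i)
  simpa [(hφ i).ne'] using this

/-- Multiplying by `1 - e^{-α i}` removes `α i` from the family that is partitioned into. -/
lemma prod_rootFactor_mul_eq_sum_exp {κ : Type*} [Fintype κ] (x : κ → M) (c : κ → ℚ)
    (F : WeightAlgebra M) (hF : ∀ μ, F.coeff μ = ∑ k, c k * kostant α (x k - μ)) :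
    (∏ i, rootFactor (α i)) * F = ∑ k, c k • exp (x k) := by
  classical
  have key (T : Finset ι) (μ : M) : ((∏ i ∈ T, rootFactor (α i)) * F).coeff μ =
      ∑ k, c k * (kostantPartitions α Tᶜ (x k - μ)).ncard := by
    induction T using Finset.induction_on generalizing μ with
    | empty => simp [hF, kostant_eq_ncard]
    | insert i T hi ih =>
      rw [Finset.prod_insert hi, mul_assoc, coeff_rootFactor_mul, ih, ih, ← Finset.sum_sub_distrib]
      refine Finset.sum_congr rfl fun k _ => ?_
      rw [ncard_kostantPartitions_eq_add hφ (Finset.mem_compl.2 hi), Finset.compl_insert, sub_sub]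
      push_cast
      ring
  ext μ
  rw [key, Finset.compl_univ, coeff_sum_smul_exp]
  simp [ncard_kostantPartitions_empty, sub_eq_zero]

end KostantPartitions

/-- The positive roots of a crystallographic, possibly non-reduced, root system: they are listed as
an injective family in a space with an invariant positive definite form, and positivity is
witnessed by a linear functional. -/
structure PositiveRootSystem (E ι : Type) [AddCommGroup E] [Module ℚ E] where
  form : E →ₗ[ℚ] E →ₗ[ℚ] ℚ
  form_comm : ∀ x y, form x y = form y x
  form_self_pos : ∀ v, v ≠ 0 → 0 < form v v
  root : ι → E
  root_injective : Function.Injective root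
  reflMap_root : ∀ i j, (∃ k, reflMap form (root i) (root j) = root k) ∨
    (∃ k, reflMap form (root i) (root j) = -root k)
  cpair_root_int : ∀ i j, ∃ z : ℤ, cpair form (root i) (root j) = z
  functional : E →ₗ[ℚ] ℚ
  functional_root_pos : ∀ i, 0 < functional (root i)

namespace PositiveRootSystem

variable {E ι : Type} [AddCommGroup E] [Module ℚ E] (R : PositiveRootSystem E ι)

section Geometry

lemma root_ne_zero (i : ι) : R.root i ≠ 0 := fun h => by
  simpa [h] using R.functional_root_pos i

lemma form_root_pos (i : ι) : 0 < R.form (R.root i) (R.root i) :=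
  R.form_self_pos _ (R.root_ne_zero i)

lemma form_root_ne_zero (i : ι) : R.form (R.root i) (R.root i) ≠ 0 := (R.form_root_pos i).ne'

lemma eq_zero_of_form_self_nonpos {v : E} (h : R.form v v ≤ 0) : v = 0 := by
  by_contra hv
  exact absurd (R.form_self_pos v hv) (not_lt.2 h)

lemma form_add_self (x y : E) :
    R.form (x + y) (x + y) = R.form x x + 2 * R.form x y + R.form y y := by
  simp only [map_add, LinearMap.add_apply, R.form_comm y x]
  ring

lemma root_ne_neg_root (i j : ι) : R.root i ≠ -R.root j := fun h => by
  have hi := R.functional_root_pos i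
  rw [h, map_neg] at hi
  linarith [R.functional_root_pos j]

/-- The coroot of `root i`, as the linear functional `cpair R.form (R.root i)`. -/
def coroot (i : ι) : E →ₗ[ℚ] ℚ where
  toFun := cpair R.form (R.root i)
  map_add' u v := by
    simp only [cpair, map_add, LinearMap.add_apply]
    ring
  map_smul' c v := by
    simp only [cpair, map_smul, LinearMap.smul_apply, smul_eq_mul, RingHom.id_apply]
    ring

lemma coroot_apply (i : ι) (v : E) :
    R.coroot i v = 2 * R.form v (R.root i) / R.form (R.root i) (R.root i) := rfl

lemma cpair_eq_coroot (i : ι) (v : E) : cpair R.form (R.root i) v = R.coroot i v := rfl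

lemma coroot_mul_form (i : ι) (v : E) :
    R.coroot i v * R.form (R.root i) (R.root i) = 2 * R.form v (R.root i) := by
  rw [coroot_apply, div_mul_cancel₀ _ (R.form_root_ne_zero i)]

lemma coroot_self (i : ι) : R.coroot i (R.root i) = 2 := by
  rw [coroot_apply, mul_div_assoc, div_self (R.form_root_ne_zero i), mul_one]

lemma coroot_pos_iff {i : ι} {v : E} : 0 < R.coroot i v ↔ 0 < R.form v (R.root i) := by
  rw [coroot_apply, div_pos_iff_of_pos_right (R.form_root_pos i), mul_pos_iff_of_pos_left two_pos]

lemma coroot_nonneg_iff {i : ι} {v : E} : 0 ≤ R.coroot i v ↔ 0 ≤ R.form v (R.root i) := by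
  rw [coroot_apply, le_div_iff₀ (R.form_root_pos i), zero_mul, mul_nonneg_iff_of_pos_left two_pos]

/-- The reflection in the hyperplane orthogonal to `root i`. -/
abbrev reflection (i : ι) : E ≃ₗ[ℚ] E := refl R.form (R.root i) (R.form_root_ne_zero i)

lemma reflection_apply (i : ι) (v : E) :
    R.reflection i v = v - R.coroot i v • R.root i := by
  rw [← cpair_eq_coroot]
  exact reflMap_apply R.form (R.root i) v

lemma reflection_root_self (i : ι) : R.reflection i (R.root i) = -R.root i := by
  rw [reflection_apply, coroot_self, two_smul]
  abel

lemma reflection_reflection (i : ι) (v : E) : R.reflection i (R.reflection i v) = v :=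
  reflMap_involutive R.form _ (R.form_root_ne_zero i) v

lemma reflection_mul_self (i : ι) : R.reflection i * R.reflection i = 1 :=
  LinearEquiv.ext (R.reflection_reflection i)

lemma reflection_inv (i : ι) : (R.reflection i)⁻¹ = R.reflection i :=
  inv_eq_of_mul_eq_one_left (R.reflection_mul_self i)

lemma form_reflection (i : ι) (x y : E) :
    R.form (R.reflection i x) (R.reflection i y) = R.form x y := by
  simp only [reflection_apply, map_sub, map_smul, LinearMap.sub_apply, LinearMap.smul_apply,
    smul_eq_mul, R.form_comm (R.root i) y]
  linear_combination R.coroot i x / 2 * R.coroot_mul_form i y +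
    R.coroot i y / 2 * R.coroot_mul_form i x

/-- The Weyl group. -/
abbrev W : Subgroup (E ≃ₗ[ℚ] E) := weylGroup R.form R.root R.form_root_ne_zero

lemma reflection_mem (i : ι) : R.reflection i ∈ R.W := Subgroup.subset_closure ⟨i, rfl⟩

lemma W_induction {p : (E ≃ₗ[ℚ] E) → Prop} (one : p 1)
    (reflection_mul : ∀ i w, w ∈ R.W → p w → p (R.reflection i * w)) {w : E ≃ₗ[ℚ] E}
    (hw : w ∈ R.W) : p w := by
  refine Subgroup.closure_induction_left (p := fun x _ => p x) one ?_ ?_ hw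
  · rintro _ ⟨i, rfl⟩ y hy hpy
    exact reflection_mul i y hy hpy
  · rintro _ ⟨i, rfl⟩ y hy hpy
    exact R.reflection_inv i ▸ reflection_mul i y hy hpy

variable {R} {w : E ≃ₗ[ℚ] E}

lemma form_map (hw : w ∈ R.W) (x y : E) : R.form (w x) (w y) = R.form x y := by
  refine R.W_induction (p := fun w => R.form (w x) (w y) = R.form x y) rfl ?_ hw
  intro i w _ ih
  rw [LinearEquiv.mul_apply, LinearEquiv.mul_apply, form_reflection, ih]

lemma map_root (hw : w ∈ R.W) (j : ι) :
    (∃ k, w (R.root j) = R.root k) ∨ (∃ k, w (R.root j) = -R.root k) := by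
  refine R.W_induction
    (p := fun w => (∃ k, w (R.root j) = R.root k) ∨ (∃ k, w (R.root j) = -R.root k))
    (Or.inl ⟨j, rfl⟩) ?_ hw
  rintro i w - (⟨k, hk⟩ | ⟨k, hk⟩)
  · rw [LinearEquiv.mul_apply, hk]
    exact R.reflMap_root i k
  · rw [LinearEquiv.mul_apply, hk, map_neg]
    rcases R.reflMap_root i k with ⟨m, hm⟩ | ⟨m, hm⟩
    · exact Or.inr ⟨m, congrArg Neg.neg hm⟩
    · exact Or.inl ⟨m, neg_eq_iff_eq_neg.2 hm⟩

variable (R) in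
/-- The positive roots sent to negative roots by `w`; their number is the length of `w`. -/
def IsInversion (w : E ≃ₗ[ℚ] E) (i : ι) : Prop := ∃ j, w (R.root i) = -R.root j

lemma exists_map_root_of_not_isInversion (hw : w ∈ R.W) {i : ι} (h : ¬R.IsInversion w i) :
    ∃ j, w (R.root i) = R.root j :=
  (map_root hw i).resolve_right h

lemma isInversion_reflection_self (i : ι) : R.IsInversion (R.reflection i) i :=
  ⟨i, R.reflection_root_self i⟩

lemma reflection_conj (hw : w ∈ R.W) {i j : ι} {t : ℚ} (h : w (R.root i) = t • R.root j) :
    w * R.reflection i * w⁻¹ = R.reflection j := by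
  have ht : t ≠ 0 := by
    rintro rfl
    exact R.root_ne_zero i ((LinearEquiv.map_eq_zero_iff w).1 (by rw [h, zero_smul]))
  ext v
  have hv : w (w⁻¹ v) = v := w.apply_symm_apply v
  have pairing : R.form (w⁻¹ v) (R.root i) = t * R.form v (R.root j) := by
    rw [← form_map hw, hv, h, map_smul, smul_eq_mul]
  have norm : R.form (R.root i) (R.root i) = t * t * R.form (R.root j) (R.root j) := by
    rw [← form_map hw, h]
    simp only [map_smul, LinearMap.smul_apply, smul_eq_mul]
    ring
  have coroot_eq : R.coroot i (w⁻¹ v) * t = R.coroot j v := by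
    rw [coroot_apply, coroot_apply, pairing, norm]
    have := R.form_root_ne_zero j
    field_simp
  rw [LinearEquiv.mul_apply, LinearEquiv.mul_apply, reflection_apply, reflection_apply, map_sub,
    map_smul, hv, h, smul_smul, coroot_eq]

lemma reflection_eq_of_root_eq_smul {i j : ι} {t : ℚ} (h : R.root i = t • R.root j) :
    R.reflection i = R.reflection j := by
  simpa using reflection_conj (one_mem R.W) (i := i) (j := j) (t := t) h

end Geometry

section SimpleRoots

/-- Simple roots, characterised by the property that the reflection inverts only multiples of
the root itself. Several proportional roots may be simple. -/
def IsSimple (i : ι) : Prop :=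
  ∀ j, R.IsInversion (R.reflection i) j → ∃ t : ℚ, R.root j = t • R.root i

/-- The product of a word in the simple reflections. -/
def wordProd (l : List {i // R.IsSimple i}) : E ≃ₗ[ℚ] E := (l.map fun i => R.reflection i).prod

lemma wordProd_nil : R.wordProd [] = 1 := rfl

lemma wordProd_cons (i : {i // R.IsSimple i}) (l : List {i // R.IsSimple i}) :
    R.wordProd (i :: l) = R.reflection i * R.wordProd l := by
  simp [wordProd]

lemma wordProd_append (l l' : List {i // R.IsSimple i}) :
    R.wordProd (l ++ l') = R.wordProd l * R.wordProd l' := by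
  simp [wordProd]

lemma wordProd_singleton (i : {i // R.IsSimple i}) : R.wordProd [i] = R.reflection i := by
  simp [wordProd]

lemma wordProd_mem (l : List {i // R.IsSimple i}) : R.wordProd l ∈ R.W := by
  refine Subgroup.list_prod_mem _ fun x hx => ?_
  obtain ⟨i, -, rfl⟩ := List.mem_map.1 hx
  exact R.reflection_mem i

variable {R} in
lemma exists_wordProd_eq_mul_reflection (l : List {i // R.IsSimple i}) {g : ι}
    (h : R.IsInversion (R.wordProd l) g) :
    ∃ l' : List {i // R.IsSimple i}, l'.length < l.length ∧
      R.wordProd l' = R.wordProd l * R.reflection g := by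
  induction l with
  | nil => exact (h.elim fun j hj => R.root_ne_neg_root g j hj).elim
  | cons k l ih =>
    rw [wordProd_cons] at h ⊢
    rcases map_root (R.wordProd_mem l) g with ⟨m, hm⟩ | hneg
    · obtain ⟨t, ht⟩ := k.2 m (h.imp fun j hj => by rwa [LinearEquiv.mul_apply, hm] at hj)
      refine ⟨l, by simp, ?_⟩
      rw [← reflection_conj (R.wordProd_mem l) (hm.trans ht), inv_mul_cancel_right, mul_assoc,
        reflection_mul_self, mul_one]
    · obtain ⟨l', hlt, hl'⟩ := ih hneg
      refine ⟨k :: l', by simpa using hlt, ?_⟩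
      rw [wordProd_cons, hl', mul_assoc]

variable {R} in
lemma wordProd_eq_one (n : ℕ) (l : List {i // R.IsSimple i}) (hn : l.length = n)
    (h : ∀ i, ¬R.IsInversion (R.wordProd l) i) : R.wordProd l = 1 := by
  induction n using Nat.strong_induction_on generalizing l with
  | _ n ih =>
    subst hn
    rcases List.eq_nil_or_concat' l with rfl | ⟨l', g, rfl⟩
    · exact R.wordProd_nil
    · rw [wordProd_append, wordProd_singleton] at h ⊢
      have hg : R.IsInversion (R.wordProd l') g := by
        refine (map_root (R.wordProd_mem l') g).resolve_left fun ⟨m, hm⟩ => h g ⟨m, ?_⟩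
        rw [LinearEquiv.mul_apply, reflection_root_self, map_neg, hm]
      obtain ⟨m, hm, hm'⟩ := exists_wordProd_eq_mul_reflection l' hg
      rw [← hm'] at h ⊢
      exact ih m.length (hm.trans (by simp)) m rfl h

lemma eq_of_form_self_le {x y z : E} {p q : ℚ} (hp : 0 < p) (hq : 0 < q) (hpq : p + q = 1)
    (hz : z = p • x + q • y) (hx : R.form x x ≤ R.form z z) (hy : R.form y y ≤ R.form z z) :
    x = y := by
  have key : R.form z z =
      p * R.form x x + q * R.form y y - p * q * R.form (x - y) (x - y) := by
    obtain rfl : q = 1 - p := by linarith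
    simp only [hz, map_add, map_sub, map_smul, LinearMap.add_apply, LinearMap.sub_apply,
      LinearMap.smul_apply, smul_eq_mul, R.form_comm y x]
    ring
  have hle : p * q * R.form (x - y) (x - y) ≤ 0 := by
    have hx' := mul_le_mul_of_nonneg_left hx hp.le
    have hy' := mul_le_mul_of_nonneg_left hy hq.le
    have hz' : p * R.form z z + q * R.form z z = R.form z z := by rw [← add_mul, hpq, one_mul]
    linarith
  exact sub_eq_zero.1 (R.eq_zero_of_form_self_nonpos
    (nonpos_of_mul_nonpos_right hle (mul_pos hp hq)))

/-- The positive multiple of `root i` on the hyperplane `functional = 1`. -/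
def normalizedRoot (i : ι) : E := (R.functional (R.root i))⁻¹ • R.root i

lemma root_eq_smul_normalizedRoot (i : ι) :
    R.root i = R.functional (R.root i) • R.normalizedRoot i := by
  rw [normalizedRoot, smul_inv_smul₀ (R.functional_root_pos i).ne']

lemma exists_normalizedRoot_eq_convexCombination {i j : ι}
    (h : R.IsInversion (R.reflection i) j) :
    ∃ k, ∃ p q : ℚ, 0 < p ∧ 0 < q ∧ p + q = 1 ∧
      R.normalizedRoot i = p • R.normalizedRoot j + q • R.normalizedRoot k := by
  obtain ⟨k, hk⟩ := h
  have hi := R.functional_root_pos i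
  have hj := R.functional_root_pos j
  have hk' := R.functional_root_pos k
  have hsum : R.coroot i (R.root j) • R.root i = R.root j + R.root k := by
    rw [reflection_apply] at hk
    rw [← neg_eq_iff_eq_neg.2 hk]
    abel
  have hφ : R.coroot i (R.root j) * R.functional (R.root i) =
      R.functional (R.root j) + R.functional (R.root k) := by
    rw [← map_add, ← hsum, map_smul, smul_eq_mul]
  set n := R.functional (R.root j) + R.functional (R.root k) with hn
  have hn0 : 0 < n := by positivity
  refine ⟨k, R.functional (R.root j) / n, R.functional (R.root k) / n, by positivity,
    by positivity, by rw [← add_div, ← hn, div_self hn0.ne'], ?_⟩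
  have hc : R.coroot i (R.root j) ≠ 0 := fun h0 => by
    rw [h0, zero_mul] at hφ
    exact hn0.ne hφ
  rw [div_eq_inv_mul, div_eq_inv_mul, mul_smul, mul_smul, ← smul_add,
    ← root_eq_smul_normalizedRoot, ← root_eq_smul_normalizedRoot, ← hsum, smul_smul, ← hφ,
    normalizedRoot, mul_inv, mul_right_comm, inv_mul_cancel₀ hc, one_mul]

variable [Finite ι]

/-- Among the normalised roots minimising `ℓ`, one of maximal norm is an extreme point of the
convex hull of all normalised roots, so it is not a proper convex combination of others. -/
lemma exists_isSimple_lt_zero (ℓ : E →ₗ[ℚ] ℚ) {i : ι} (hi : ℓ (R.root i) < 0) :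
    ∃ j, R.IsSimple j ∧ ℓ (R.root j) < 0 := by
  have hℓ (k : ι) : ℓ (R.root k) = R.functional (R.root k) * ℓ (R.normalizedRoot k) := by
    conv_lhs => rw [root_eq_smul_normalizedRoot, map_smul, smul_eq_mul]
  have : Nonempty ι := ⟨i⟩
  obtain ⟨j, hj⟩ := Finite.exists_max fun k => toLex
    (-ℓ (R.normalizedRoot k), R.form (R.normalizedRoot k) (R.normalizedRoot k))
  simp only [Prod.Lex.toLex_le_toLex, neg_lt_neg_iff, neg_inj] at hj
  have hmin (k : ι) : ℓ (R.normalizedRoot j) ≤ ℓ (R.normalizedRoot k) :=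
    (hj k).elim le_of_lt fun h => h.1.ge
  have hmax (k : ι) (hk : ℓ (R.normalizedRoot k) ≤ ℓ (R.normalizedRoot j)) :
      R.form (R.normalizedRoot k) (R.normalizedRoot k) ≤
        R.form (R.normalizedRoot j) (R.normalizedRoot j) :=
    (hj k).elim (fun h => absurd h hk.not_gt) fun h => h.2
  refine ⟨j, fun k hk => ?_, ?_⟩
  · obtain ⟨m, p, q, hp, hq, hpq, hcomb⟩ := R.exists_normalizedRoot_eq_convexCombination hk
    have hℓj : p * (ℓ (R.normalizedRoot k) - ℓ (R.normalizedRoot j)) +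
        q * (ℓ (R.normalizedRoot m) - ℓ (R.normalizedRoot j)) = 0 := by
      have := congrArg ℓ hcomb
      simp only [map_add, map_smul, smul_eq_mul] at this
      linear_combination -this - ℓ (R.normalizedRoot j) * hpq
    have hk' := mul_nonneg hp.le (sub_nonneg.2 (hmin k))
    have hm' := mul_nonneg hq.le (sub_nonneg.2 (hmin m))
    have hkm : R.normalizedRoot k = R.normalizedRoot m :=
      R.eq_of_form_self_le hp hq hpq hcomb
        (hmax k (sub_nonpos.1 (nonpos_of_mul_nonpos_right (by linarith) hp)))
        (hmax m (sub_nonpos.1 (nonpos_of_mul_nonpos_right (by linarith) hq)))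
    rw [← hkm, ← add_smul, hpq, one_smul] at hcomb
    refine ⟨R.functional (R.root k) * (R.functional (R.root j))⁻¹, ?_⟩
    rw [mul_smul, ← normalizedRoot, hcomb, ← root_eq_smul_normalizedRoot]
  · rw [hℓ] at hi ⊢
    exact mul_neg_of_pos_of_neg (R.functional_root_pos j) ((hmin i).trans_lt
      (neg_of_mul_neg_right hi (R.functional_root_pos i).le))

lemma nonneg_of_isSimple (ℓ : E →ₗ[ℚ] ℚ) (h : ∀ i, R.IsSimple i → 0 ≤ ℓ (R.root i)) (i : ι) :
    0 ≤ ℓ (R.root i) := by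
  by_contra! hi
  obtain ⟨j, hj, hneg⟩ := R.exists_isSimple_lt_zero ℓ hi
  exact (h j hj).not_gt hneg

lemma exists_isSimple_form_pos (i : ι) : ∃ k, R.IsSimple k ∧ 0 < R.form (R.root i) (R.root k) := by
  obtain ⟨k, hk, hneg⟩ := R.exists_isSimple_lt_zero (-R.form (R.root i)) (i := i)
    (by simpa using R.form_root_pos i)
  exact ⟨k, hk, by simpa using hneg⟩

lemma exists_wordProd_eq_reflection (i : ι) : ∃ l, R.wordProd l = R.reflection i := by
  have wf : WellFounded fun i j : ι => R.functional (R.root i) < R.functional (R.root j) :=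
    have : IsTrans ι fun i j => R.functional (R.root i) < R.functional (R.root j) :=
      ⟨fun _ _ _ => lt_trans⟩
    have : Std.Irrefl fun i j : ι => R.functional (R.root i) < R.functional (R.root j) :=
      ⟨fun _ => lt_irrefl _⟩
    Finite.wellFounded_of_trans_of_irrefl _
  induction i using wf.induction with
  | _ i ih =>
    obtain ⟨k, hk, hpos⟩ := R.exists_isSimple_form_pos i
    rcases map_root (R.reflection_mem k) i with ⟨j, hj⟩ | hneg
    · have hlt : R.functional (R.root j) < R.functional (R.root i) := by
        rw [← hj, reflection_apply, map_sub, map_smul, smul_eq_mul]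
        linarith [mul_pos (R.coroot_pos_iff.2 hpos) (R.functional_root_pos k)]
      obtain ⟨l, hl⟩ := ih j hlt
      have hconj := reflection_conj (R.reflection_mem k) (i := j) (j := i) (t := 1)
        (by rw [← hj, reflection_reflection, one_smul])
      refine ⟨⟨k, hk⟩ :: (l ++ [⟨k, hk⟩]), ?_⟩
      rw [wordProd_cons, wordProd_append, wordProd_singleton, hl, ← mul_assoc, ← hconj,
        reflection_inv]
    · obtain ⟨t, ht⟩ := hk i hneg
      exact ⟨[⟨k, hk⟩], by rw [wordProd_singleton, reflection_eq_of_root_eq_smul ht]⟩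

variable {R} {w : E ≃ₗ[ℚ] E}

lemma exists_wordProd_eq (hw : w ∈ R.W) : ∃ l, R.wordProd l = w := by
  refine R.W_induction (p := fun w => ∃ l, R.wordProd l = w) ⟨[], R.wordProd_nil⟩ ?_ hw
  rintro i _ - ⟨l, rfl⟩
  obtain ⟨l', hl'⟩ := R.exists_wordProd_eq_reflection i
  exact ⟨l' ++ l, by rw [wordProd_append, hl']⟩

lemma W_induction_simple {p : (E ≃ₗ[ℚ] E) → Prop} (one : p 1)
    (reflection_mul : ∀ i w, R.IsSimple i → p w → p (R.reflection i * w)) (hw : w ∈ R.W) :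
    p w := by
  obtain ⟨l, rfl⟩ := exists_wordProd_eq hw
  induction l with
  | nil => exact one
  | cons i l ih => exact R.wordProd_cons i l ▸ reflection_mul i _ i.2 (ih (R.wordProd_mem l))

lemma eq_one_of_forall_not_isInversion (hw : w ∈ R.W) (h : ∀ i, ¬R.IsInversion w i) : w = 1 := by
  obtain ⟨l, rfl⟩ := exists_wordProd_eq hw
  exact wordProd_eq_one _ l rfl h

lemma eq_one_of_map_eq_self (hw : w ∈ R.W) {v : E} (hv : ∀ i, 0 < R.form v (R.root i))
    (h : w v = v) : w = 1 := by
  refine eq_one_of_forall_not_isInversion hw fun i ⟨j, hj⟩ => ?_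
  have := form_map hw v (R.root i)
  rw [h, hj, map_neg] at this
  linarith [hv i, hv j]

instance finite_W : Finite R.W := by
  have hmem (w : R.W) (i : ι) :
      (w : E ≃ₗ[ℚ] E) (R.root i) ∈ Set.range R.root ∪ Set.range fun j => -R.root j :=
    (map_root w.2 i).imp (fun ⟨k, hk⟩ => ⟨k, hk.symm⟩) fun ⟨k, hk⟩ => ⟨k, hk.symm⟩
  have hfin : Finite ↑(Set.range R.root ∪ Set.range fun j => -R.root j) :=
    ((Set.finite_range _).union (Set.finite_range _)).to_subtype
  refine Finite.of_injective (β := ι → ↑(Set.range R.root ∪ Set.range fun j => -R.root j))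
    (fun w i => ⟨_, hmem w i⟩) fun u w h => ?_
  have huw (i : ι) : (w⁻¹ * u : E ≃ₗ[ℚ] E) (R.root i) = R.root i := by
    have hi : (u : E ≃ₗ[ℚ] E) (R.root i) = (w : E ≃ₗ[ℚ] E) (R.root i) :=
      congrArg Subtype.val (congrFun h i)
    rw [LinearEquiv.mul_apply, hi]
    exact (w : E ≃ₗ[ℚ] E).symm_apply_apply _
  have hone : (w⁻¹ * u : E ≃ₗ[ℚ] E) = 1 := by
    refine eq_one_of_forall_not_isInversion (R.W.mul_mem (R.W.inv_mem w.2) u.2) ?_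
    rintro i ⟨j, hj⟩
    exact R.root_ne_neg_root i j ((huw i).symm.trans hj)
  exact Subtype.ext (inv_mul_eq_one.1 hone).symm

end SimpleRoots

section SignedPermutation

open scoped Classical in
/-- The sign by which `w` acts on `root i`: the action on roots is by signed permutations. -/
def sign (w : E ≃ₗ[ℚ] E) (i : ι) : ℚ := if R.IsInversion w i then -1 else 1

open scoped Classical in
/-- The positive roots made negative by `w`. -/
def inversions [Fintype ι] (w : E ≃ₗ[ℚ] E) : Finset ι := {i | R.IsInversion w i}

/-- The height function, as the linear functional `htq R.form R.root`. -/
def height [Fintype ι] : E →ₗ[ℚ] ℚ where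
  toFun := htq R.form R.root
  map_add' u v := by
    simp only [htq, cpair_eq_coroot, map_add, Finset.sum_add_distrib, add_div]
  map_smul' c v := by
    simp only [htq, cpair_eq_coroot, map_smul, smul_eq_mul, ← Finset.mul_sum, mul_div_assoc,
      RingHom.id_apply]

/-- The half sum of the positive roots. -/
abbrev ρ [Fintype ι] : E := rho R.root

variable {R} {w : E ≃ₗ[ℚ] E}

lemma sign_eq_neg_one {i : ι} (h : R.IsInversion w i) : R.sign w i = -1 := if_pos h

lemma sign_eq_one {i : ι} (h : ¬R.IsInversion w i) : R.sign w i = 1 := if_neg h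

lemma sign_mul_self (w : E ≃ₗ[ℚ] E) (i : ι) : R.sign w i * R.sign w i = 1 := by
  unfold sign
  split_ifs <;> norm_num

lemma exists_map_root_eq_sign_smul (hw : w ∈ R.W) (i : ι) :
    ∃ j, w (R.root i) = R.sign w i • R.root j := by
  by_cases h : R.IsInversion w i
  · exact h.imp fun j hj => by rw [sign_eq_neg_one h, hj, neg_one_smul]
  · obtain ⟨j, hj⟩ := exists_map_root_of_not_isInversion hw h
    exact ⟨j, by rw [sign_eq_one h, hj, one_smul]⟩

lemma exists_perm [Finite ι] (hw : w ∈ R.W) :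
    ∃ σ : Equiv.Perm ι, ∀ i, w (R.root i) = R.sign w i • R.root (σ i) := by
  choose f hf using exists_map_root_eq_sign_smul hw
  have hinj : Function.Injective f := fun i j hij => by
    have hroot : R.root i = (R.sign w i * R.sign w j) • R.root j := w.injective <| by
      rw [map_smul, hf i, hf j, hij, smul_smul, mul_assoc, sign_mul_self, mul_one]
    have hsign : 0 < R.sign w i * R.sign w j := by
      have := R.functional_root_pos i
      rw [hroot, map_smul, smul_eq_mul] at this
      exact pos_of_mul_pos_left this (R.functional_root_pos j).le
    have hone : R.sign w i * R.sign w j = 1 := (mul_self_eq_one_iff.1 (by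
      rw [mul_mul_mul_comm, sign_mul_self, sign_mul_self, one_mul])).resolve_right
        fun h => by norm_num [h] at hsign
    exact R.root_injective (by rw [hroot, hone, one_smul])
  exact ⟨Equiv.ofBijective f (Finite.injective_iff_bijective.1 hinj), hf⟩

lemma coroot_map (hw : w ∈ R.W) {i j : ι} (h : w (R.root i) = R.sign w i • R.root j) (v : E) :
    R.coroot j (w v) = R.sign w i * R.coroot i v := by
  have pairing := form_map hw v (R.root i)
  have norm := form_map hw (R.root i) (R.root i)
  simp only [h, map_smul, LinearMap.smul_apply, smul_eq_mul, ← mul_assoc, sign_mul_self,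
    one_mul] at pairing norm
  rw [coroot_apply, coroot_apply, ← pairing, ← norm]
  linear_combination
    -(2 * R.form (w v) (R.root j) / R.form (R.root j) (R.root j)) * R.sign_mul_self w i

variable [Fintype ι]

lemma mem_inversions {i : ι} : i ∈ R.inversions w ↔ R.IsInversion w i := by
  simp [inversions]

lemma len_eq_card_inversions (w : E ≃ₗ[ℚ] E) : len R.root w = (R.inversions w).card := by
  classical
  rw [inversions, ← Fintype.card_subtype, ← Nat.card_eq_fintype_card]
  rfl

lemma sum_sub_sum_sign_smul (w : E ≃ₗ[ℚ] E) {V : Type*} [AddCommGroup V] [Module ℚ V]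
    (g : ι → V) : ∑ i, g i - ∑ i, R.sign w i • g i = (2 : ℚ) • ∑ i ∈ R.inversions w, g i := by
  classical
  rw [← Finset.sum_sub_distrib, Finset.smul_sum, inversions, Finset.sum_filter]
  refine Finset.sum_congr rfl fun i _ => ?_
  unfold sign
  split_ifs
  · rw [neg_one_smul, sub_neg_eq_add, two_smul]
  · rw [one_smul, sub_self]

lemma two_mul_height (v : E) : 2 * R.height v = ∑ i, R.coroot i v :=
  mul_div_cancel₀ _ two_ne_zero

lemma height_sub_height_map (hw : w ∈ R.W) (v : E) :
    R.height v - R.height (w v) = ∑ i ∈ R.inversions w, R.coroot i v := by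
  obtain ⟨σ, hσ⟩ := exists_perm hw
  have hsum : ∑ i, R.coroot i (w v) = ∑ i, R.sign w i • R.coroot i v := by
    rw [← Equiv.sum_comp σ]
    exact Finset.sum_congr rfl fun i _ => coroot_map hw (hσ i) v
  refine mul_left_cancel₀ (two_ne_zero' ℚ) ?_
  rw [mul_sub, two_mul_height, two_mul_height, hsum, sum_sub_sum_sign_smul, smul_eq_mul]

lemma rho_sub_map_rho {σ : Equiv.Perm ι} (hσ : ∀ i, w (R.root i) = R.sign w i • R.root (σ i)) :
    R.ρ - w R.ρ = ∑ i ∈ R.inversions w, R.root (σ i) := by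
  simp only [ρ, rho, map_smul, map_sum, hσ]
  rw [← Equiv.sum_comp σ R.root, ← smul_sub, sum_sub_sum_sign_smul w fun i => R.root (σ i),
    inv_smul_smul₀ two_ne_zero]

lemma coroot_rho_pos (i : ι) : 0 < R.coroot i R.ρ := by
  obtain ⟨σ, hσ⟩ := exists_perm (R.reflection_mem i)
  have h := congrArg R.functional (rho_sub_map_rho hσ)
  rw [reflection_apply, sub_sub_cancel, map_smul, map_sum, smul_eq_mul] at h
  refine pos_of_mul_pos_left (h ▸ ?_) (R.functional_root_pos i).le
  exact Finset.sum_pos (fun j _ => R.functional_root_pos _)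
    ⟨i, mem_inversions.2 (isInversion_reflection_self i)⟩

lemma form_rho_root_pos (i : ι) : 0 < R.form R.ρ (R.root i) :=
  R.coroot_pos_iff.1 (coroot_rho_pos i)

end SignedPermutation

section Denominator

open WeightAlgebra

/-- Reducedness: no two distinct positive roots are proportional. -/
def IsReduced : Prop := ∀ i j (t : ℚ), R.root j = t • R.root i → i = j

variable {R} in
lemma isInversion_reflection_iff (hR : R.IsReduced) {i : ι} (hi : R.IsSimple i) {j : ι} :
    R.IsInversion (R.reflection i) j ↔ j = i := by
  constructor
  · intro hj
    obtain ⟨t, ht⟩ := hi j hj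
    exact (hR i j t ht).symm
  · rintro rfl
    exact isInversion_reflection_self j

variable {R} in
lemma exists_perm_reflection [Finite ι] (i : ι) :
    ∃ σ : Equiv.Perm ι,
      (∀ j, R.reflection i (R.root j) = R.sign (R.reflection i) j • R.root (σ j)) ∧ σ i = i := by
  obtain ⟨σ, hσ⟩ := exists_perm (R.reflection_mem i)
  have h := hσ i
  rw [reflection_root_self, sign_eq_neg_one (isInversion_reflection_self i), neg_one_smul,
    neg_inj] at h
  exact ⟨σ, hσ, (R.root_injective h).symm⟩

variable [Fintype ι]

/-- The Weyl denominator `e^ρ ∏ (1 - e^{-α})`. -/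
def denominator : WeightAlgebra E := exp R.ρ * ∏ i, rootFactor (R.root i)

lemma denominator_ne_zero : R.denominator ≠ 0 :=
  mul_ne_zero (exp_ne_zero _)
    (Finset.prod_ne_zero_iff.2 fun i _ => rootFactor_ne_zero (R.root_ne_zero i))

variable {R}

section Reduced

variable (hR : R.IsReduced) {i : ι} (hi : R.IsSimple i)
include hR hi

lemma coroot_rho_of_isSimple : R.coroot i R.ρ = 1 := by
  obtain ⟨σ, hσ, hσi⟩ := exists_perm_reflection (R := R) i
  have hinv : R.inversions (R.reflection i) = {i} := by
    ext j
    rw [mem_inversions, isInversion_reflection_iff hR hi, Finset.mem_singleton]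
  have h := rho_sub_map_rho hσ
  rw [hinv, Finset.sum_singleton, hσi, reflection_apply, sub_sub_cancel] at h
  exact smul_left_injective ℚ (R.root_ne_zero i) (h.trans (one_smul ℚ _).symm)

lemma prod_rootFactor_reflection :
    ∏ j, rootFactor (R.reflection i (R.root j)) =
      -(exp (R.root i) * ∏ j, rootFactor (R.root j)) := by
  classical
  obtain ⟨σ, hσ, hσi⟩ := exists_perm_reflection (R := R) i
  rw [← Equiv.prod_comp σ fun j => rootFactor (R.root j),
    ← Finset.mul_prod_erase _ _ (Finset.mem_univ i),
    ← Finset.mul_prod_erase _ (fun j => rootFactor (R.root (σ j))) (Finset.mem_univ i),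
    reflection_root_self, rootFactor_neg, hσi, neg_mul, mul_assoc]
  congr 3
  refine Finset.prod_congr rfl fun j hj => ?_
  rw [hσ, sign_eq_one ((isInversion_reflection_iff hR hi).not.2 (Finset.ne_of_mem_erase hj)),
    one_smul]

lemma act_denominator : act (R.reflection i) R.denominator = -R.denominator := by
  rw [denominator, map_mul, map_prod, act_exp]
  simp only [act_rootFactor]
  rw [prod_rootFactor_reflection hR hi, mul_neg, ← mul_assoc, ← exp_add, reflection_apply,
    coroot_rho_of_isSimple hR hi, one_smul, sub_add_cancel]

lemma coeff_denominator_reflection (v : E) :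
    R.denominator.coeff (R.reflection i v) = -R.denominator.coeff v := by
  rw [← coeff_act (R.reflection i) R.denominator v, act_denominator hR hi,
    AddMonoidAlgebra.coeff_neg, Finsupp.neg_apply, neg_neg]

end Reduced

lemma coeff_denominator_map_ne_zero (hR : R.IsReduced) {w : E ≃ₗ[ℚ] E} (hw : w ∈ R.W) {v : E}
    (hv : R.denominator.coeff v ≠ 0) : R.denominator.coeff (w v) ≠ 0 := by
  refine W_induction_simple (p := fun w => R.denominator.coeff (w v) ≠ 0) hv ?_ hw
  intro i w hi h
  rwa [LinearEquiv.mul_apply, coeff_denominator_reflection hR hi, neg_ne_zero]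

lemma exists_eq_rho_sub_sum {v : E} (hv : R.denominator.coeff v ≠ 0) :
    ∃ n : ι → ℕ, v = R.ρ - ∑ i, n i • R.root i := by
  rw [denominator, coeff_exp_mul] at hv
  obtain ⟨n, hn⟩ := exists_eq_neg_sum_of_coeff_prod_rootFactor_ne_zero Finset.univ hv
  exact ⟨n, by rw [sub_eq_add_neg, ← hn, add_sub_cancel]⟩

lemma exists_coroot_eq_intCast_of_coeff_denominator_ne_zero (hR : R.IsReduced) {i : ι}
    (hi : R.IsSimple i) {v : E} (hv : R.denominator.coeff v ≠ 0) : ∃ z : ℤ, R.coroot i v = z := by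
  obtain ⟨n, rfl⟩ := exists_eq_rho_sub_sum hv
  choose z hz using R.cpair_root_int i
  refine ⟨1 - ∑ j, n j * z j, ?_⟩
  simp only [map_sub, map_sum, map_nsmul, coroot_rho_of_isSimple hR hi, ← cpair_eq_coroot, hz,
    nsmul_eq_mul]
  push_cast
  rfl

lemma coroot_pos_of_form_reflection_rho_le (hR : R.IsReduced) {i : ι} (hi : R.IsSimple i) {v : E}
    (hv : R.denominator.coeff v ≠ 0) (h : R.form (R.reflection i v) R.ρ ≤ R.form v R.ρ) :
    0 < R.coroot i v := by
  have hne : R.coroot i v ≠ 0 := fun h0 => hv <| by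
    have := coeff_denominator_reflection hR hi v
    rw [reflection_apply, h0, zero_smul, sub_zero] at this
    exact self_eq_neg.1 this
  rw [reflection_apply, map_sub, map_smul, LinearMap.sub_apply, LinearMap.smul_apply, smul_eq_mul,
    R.form_comm (R.root i), sub_le_self_iff] at h
  exact (nonneg_of_mul_nonneg_left h (form_rho_root_pos i)).lt_of_ne' hne

/-- By integrality a strictly dominant exponent of the denominator is `ρ` plus a dominant vector,
and it is also `ρ` minus a sum of positive roots. -/
lemma eq_rho_of_coroot_pos (hR : R.IsReduced) {v : E} (hv : R.denominator.coeff v ≠ 0)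
    (h : ∀ i, R.IsSimple i → 0 < R.coroot i v) : v = R.ρ := by
  have hdom : ∀ i, 0 ≤ R.form (v - R.ρ) (R.root i) := by
    refine R.nonneg_of_isSimple (R.form (v - R.ρ)) fun i hi => ?_
    obtain ⟨z, hz⟩ := exists_coroot_eq_intCast_of_coeff_denominator_ne_zero hR hi hv
    have hpos : 0 < z := by exact_mod_cast hz ▸ h i hi
    rw [← coroot_nonneg_iff, map_sub, coroot_rho_of_isSimple hR hi, hz, sub_nonneg]
    exact_mod_cast hpos
  obtain ⟨n, hn⟩ := exists_eq_rho_sub_sum hv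
  have hsub : v - R.ρ = -∑ i, n i • R.root i := by
    rw [hn]
    abel
  refine sub_eq_zero.1 (R.eq_zero_of_form_self_nonpos ?_)
  have hform : R.form (v - R.ρ) (v - R.ρ) = -∑ i, n i • R.form (v - R.ρ) (R.root i) := by
    conv_lhs => rw [hsub, map_neg, map_sum, ← hsub]
    simp only [map_nsmul]
  rw [hform, neg_nonpos]
  exact Finset.sum_nonneg fun i _ => nsmul_nonneg (hdom i) _

lemma form_self_of_coeff_denominator_ne_zero (hR : R.IsReduced) {v : E}
    (hv : R.denominator.coeff v ≠ 0) : R.form v v = R.form R.ρ R.ρ := by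
  obtain ⟨w, hmax⟩ := Finite.exists_max fun w : R.W => R.form ((w : E ≃ₗ[ℚ] E) v) R.ρ
  have hwv := coeff_denominator_map_ne_zero hR w.2 hv
  rw [← form_map w.2, eq_rho_of_coroot_pos hR hwv fun i hi =>
    coroot_pos_of_form_reflection_rho_le hR hi hwv
      (hmax ⟨R.reflection i * w, R.W.mul_mem (R.reflection_mem i) w.2⟩)]

end Denominator

section Alternant

open WeightAlgebra

/-- The alternating sum `∑ det(w) e^{w v}` over the Weyl group. -/
def alternant [Fintype R.W] (v : E) : WeightAlgebra E :=
  ∑ w : R.W, LinearMap.det (w : E →ₗ[ℚ] E) • exp ((w : E ≃ₗ[ℚ] E) v)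

variable {R}

lemma form_self_of_coeff_alternant_ne_zero [Fintype R.W] {u v : E}
    (h : (R.alternant v).coeff u ≠ 0) : R.form u u = R.form v v := by
  classical
  rw [alternant, coeff_sum_smul_exp] at h
  obtain ⟨w, -, hw⟩ := Finset.exists_ne_zero_of_sum_ne_zero h
  rw [← (ite_ne_right_iff.1 hw).1, form_map w.2]

lemma det_reflection [FiniteDimensional ℚ E] (i : ι) :
    LinearMap.det (R.reflection i : E →ₗ[ℚ] E) = -1 := by
  have h : (R.reflection i : E →ₗ[ℚ] E) = LinearMap.transvection (-R.coroot i) (R.root i) := by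
    ext v
    rw [LinearMap.transvection.apply, LinearMap.neg_apply, neg_smul, ← sub_eq_add_neg]
    exact R.reflection_apply i v
  rw [h, LinearMap.transvection.det, LinearMap.neg_apply, coroot_self]
  norm_num

lemma act_reflection_alternant [FiniteDimensional ℚ E] [Fintype R.W] (i : ι) (v : E) :
    act (R.reflection i) (R.alternant v) = -R.alternant v := by
  simp only [alternant, map_sum, map_smul, act_exp]
  rw [← Finset.sum_neg_distrib]
  refine Fintype.sum_equiv (Equiv.mulLeft (⟨R.reflection i, R.reflection_mem i⟩ : R.W)) _ _
    fun w => ?_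
  rw [Equiv.coe_mulLeft, Subgroup.coe_mul, LinearEquiv.mul_apply, LinearEquiv.coe_toLinearMap_mul,
    map_mul, det_reflection, neg_one_mul, neg_smul, neg_neg]

variable [Finite ι]

/-- `w v - v` is a multiple of `root i` of the same norm as the vectors `0` and `s_i v - v`. -/
lemma eq_one_or_eq_reflection_of_sub_mem_span {w : E ≃ₗ[ℚ] E} (hw : w ∈ R.W) {v : E}
    (hv : ∀ i, 0 < R.form v (R.root i)) {i : ι} (h : w v - v ∈ ℚ ∙ R.root i) :
    w = 1 ∨ w = R.reflection i := by
  obtain ⟨r, hr⟩ := Submodule.mem_span_singleton.1 h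
  have hwv : w v = v + r • R.root i := by rw [hr, add_sub_cancel]
  have hroots : r * ((r + R.coroot i v) * R.form (R.root i) (R.root i)) = 0 := by
    have hnorm := form_map hw v v
    simp only [hwv, form_add_self, map_smul, LinearMap.smul_apply, smul_eq_mul] at hnorm
    linear_combination hnorm + r * R.coroot_mul_form i v
  rcases mul_eq_zero.1 hroots with hr0 | hr0
  · exact Or.inl (eq_one_of_map_eq_self hw hv (by rw [hwv, hr0, zero_smul, add_zero]))
  · refine Or.inr (R.reflection_inv i ▸ eq_inv_of_mul_eq_one_right
      (eq_one_of_map_eq_self (R.W.mul_mem (R.reflection_mem i) hw) hv ?_))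
    have hr' := eq_neg_of_add_eq_zero_left
      ((mul_eq_zero.1 hr0).resolve_right (R.form_root_ne_zero i))
    rw [LinearEquiv.mul_apply, hwv, hr', neg_smul, ← sub_eq_add_neg, ← reflection_apply,
      reflection_reflection]

lemma lineMoment_alternant [FiniteDimensional ℚ E] [Fintype R.W] {v : E}
    (hv : ∀ i, 0 < R.form v (R.root i)) (ℓ : E →ₗ[ℚ] ℚ) (i : ι) :
    lineMoment ℓ (R.root i) v (R.alternant v) = ℓ v - ℓ (R.reflection i v) := by
  classical
  have hmem_one : v - v ∈ ℚ ∙ R.root i := by simp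
  have hmem_refl : R.reflection i v - v ∈ ℚ ∙ R.root i := by
    rw [reflection_apply, sub_sub_cancel_left, ← neg_smul]
    exact Submodule.smul_mem _ _ (Submodule.mem_span_singleton_self _)
  have hne : (1 : R.W) ≠ ⟨R.reflection i, R.reflection_mem i⟩ := fun h => by
    have h1 : R.reflection i = 1 := (congrArg Subtype.val h).symm
    have h2 := R.reflection_root_self i
    rw [h1] at h2
    exact R.root_ne_neg_root i i h2
  rw [alternant, map_sum, ← Finset.sum_subset
    (Finset.subset_univ {1, ⟨R.reflection i, R.reflection_mem i⟩}), Finset.sum_pair hne]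
  · rw [map_smul, map_smul, det_reflection, lineMoment_exp_of_mem hmem_refl]
    change LinearMap.det LinearMap.id • lineMoment ℓ (R.root i) v (exp v) + _ = _
    rw [lineMoment_exp_of_mem hmem_one, LinearMap.det_id, one_smul, neg_one_smul, sub_eq_add_neg]
  · intro w _ hw
    rw [map_smul, lineMoment_exp_of_notMem, smul_zero]
    intro h
    refine hw (Finset.mem_insert.2 ?_)
    rw [Finset.mem_singleton, Subtype.ext_iff, Subtype.ext_iff]
    exact eq_one_or_eq_reflection_of_sub_mem_span w.2 hv h

omit [Finite ι] in
/-- Two proportional roots would make `denominator` vanish to order two along a wall on which the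
alternant vanishes to order one only. -/
lemma isReduced_of_denominator_mul_eq_alternant [Fintype ι] [FiniteDimensional ℚ E] [Fintype R.W]
    {v : E} (hv : ∀ i, 0 < R.form v (R.root i)) {F : WeightAlgebra E}
    (h : R.denominator * F = R.alternant v) : R.IsReduced := by
  classical
  intro i j t ht
  by_contra hij
  have hmem : R.root j ∈ ℚ ∙ R.root i := Submodule.mem_span_singleton.2 ⟨t, ht.symm⟩
  have hfactor : R.denominator * F = rootFactor (R.root i) * rootFactor (R.root j) *
      (exp R.ρ * (∏ k ∈ (Finset.univ.erase i).erase j, rootFactor (R.root k)) * F) := by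
    rw [denominator, ← Finset.mul_prod_erase _ _ (Finset.mem_univ i),
      ← Finset.mul_prod_erase _ _ (Finset.mem_erase.2 ⟨Ne.symm hij, Finset.mem_univ j⟩)]
    ring
  have hzero := lineMoment_alternant hv (R.form.flip (R.root i)) i
  rw [← h, hfactor, lineMoment_rootFactor_mul_rootFactor_mul hmem, reflection_apply, map_sub,
    sub_sub_cancel, map_smul, smul_eq_mul] at hzero
  exact (mul_pos (R.coroot_pos_iff.2 (hv i)) (R.form_root_pos i)).ne hzero

end Alternant

section Orbit

variable [Finite ι]

/-- The Weyl group orbit. -/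
def orbit (v : E) : Finset E := (Set.finite_range fun w : R.W => (w : E ≃ₗ[ℚ] E) v).toFinset

variable {R} {v μ : E}

lemma mem_orbit : μ ∈ R.orbit v ↔ ∃ w ∈ R.W, w v = μ := by
  simp [orbit]

lemma map_mem_orbit {w : E ≃ₗ[ℚ] E} (hw : w ∈ R.W) (hμ : μ ∈ R.orbit v) : w μ ∈ R.orbit v := by
  obtain ⟨u, hu, rfl⟩ := mem_orbit.1 hμ
  exact mem_orbit.2 ⟨w * u, R.W.mul_mem hw hu, rfl⟩

lemma self_mem_orbit : v ∈ R.orbit v := mem_orbit.2 ⟨1, one_mem _, rfl⟩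

lemma form_self_of_mem_orbit (hμ : μ ∈ R.orbit v) : R.form μ μ = R.form v v := by
  obtain ⟨w, hw, rfl⟩ := mem_orbit.1 hμ
  exact form_map hw v v

lemma exists_coroot_eq_intCast_of_mem_orbit (hv : ∀ i, ∃ z : ℤ, R.coroot i v = z)
    (hμ : μ ∈ R.orbit v) (i : ι) : ∃ z : ℤ, R.coroot i μ = z := by
  obtain ⟨w, hw, rfl⟩ := mem_orbit.1 hμ
  obtain ⟨σ, hσ⟩ := exists_perm hw
  obtain ⟨j, rfl⟩ := σ.surjective i
  obtain ⟨z, hz⟩ := hv j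
  rw [coroot_map hw (hσ j), hz]
  by_cases h : R.IsInversion w j
  · exact ⟨-z, by rw [sign_eq_neg_one h, neg_one_mul, Int.cast_neg]⟩
  · exact ⟨z, by rw [sign_eq_one h, one_mul]⟩

end Orbit

section Freudenthal

open WeightAlgebra

lemma diag_form_add (u v : E) (x : WeightAlgebra E) :
    diag (R.form (u + v)) x = diag (R.form u) x + diag (R.form v) x := by
  ext μ
  rw [AddMonoidAlgebra.coeff_add, Finsupp.add_apply, coeff_diag, coeff_diag, coeff_diag, map_add,
    LinearMap.add_apply, add_mul]

lemma diag_form_neg (u : E) (x : WeightAlgebra E) :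
    diag (R.form (-u)) x = -diag (R.form u) x := by
  ext μ
  rw [AddMonoidAlgebra.coeff_neg, Finsupp.neg_apply, coeff_diag, coeff_diag, map_neg,
    LinearMap.neg_apply, neg_mul]

/-- The derivation `e^u ↦ e^u ∑ (u, v) z_v e^v`: the pairing, through the form, of the gradient
with the gradient of `z`. -/
def gradientPairing (z : WeightAlgebra E) : Derivation ℚ (WeightAlgebra E) (WeightAlgebra E) :=
  Derivation.mk' (lift fun u => exp u * diag (R.form u) z) fun x y => by
    induction x using induction_exp with
    | exp u =>
      induction y using induction_exp with
      | exp v =>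
        simp only [← exp_add, lift_exp, diag_form_add, smul_eq_mul]
        rw [exp_add]
        ring
      | add y₁ y₂ h₁ h₂ =>
        simp only [mul_add, map_add, h₁, h₂, smul_eq_mul]
        ring
      | smul c y h => simp only [mul_smul_comm, map_smul, h, smul_eq_mul, smul_mul_assoc, smul_add]
    | add x₁ x₂ h₁ h₂ =>
      simp only [add_mul, map_add, h₁, h₂, smul_eq_mul]
      ring
    | smul c x h => simp only [smul_mul_assoc, map_smul, h, smul_eq_mul, mul_smul_comm, smul_add]

lemma gradientPairing_exp (z : WeightAlgebra E) (u : E) :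
    R.gradientPairing z (exp u) = exp u * diag (R.form u) z := lift_exp _ u

/-- The Laplacian of the form, `e^v ↦ (v, v) e^v`. -/
def laplacian : WeightAlgebra E →ₗ[ℚ] WeightAlgebra E := diag fun v => R.form v v

lemma laplacian_mul (x z : WeightAlgebra E) :
    R.laplacian (x * z) = R.laplacian x * z + x * R.laplacian z +
      (2 : ℚ) • R.gradientPairing z x := by
  induction x using induction_exp with
  | exp u =>
    ext v
    have hv := R.form_add_self u (v - u)
    rw [add_sub_cancel] at hv
    simp only [laplacian, diag_exp, gradientPairing_exp, smul_mul_assoc,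
      AddMonoidAlgebra.coeff_add, Finsupp.add_apply, AddMonoidAlgebra.coeff_smul,
      Finsupp.smul_apply, coeff_diag, coeff_exp_mul, smul_eq_mul, hv]
    ring
  | add x y hx hy =>
    simp only [add_mul, map_add, hx, hy, smul_add]
    abel
  | smul c x hx =>
    simp only [smul_mul_assoc, map_smul, Derivation.map_smul, hx, smul_add, smul_comm (2 : ℚ) c]

lemma gradientPairing_rootFactor {z G : WeightAlgebra E} {a : E}
    (h : diag (R.form a) z = rootFactor a * G) :
    R.gradientPairing z (rootFactor a) = rootFactor a * (exp (-a) * G) := by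
  rw [rootFactor, map_sub, Derivation.map_one_eq_zero, gradientPairing_exp, diag_form_neg, h,
    zero_sub, mul_neg, neg_neg, mul_left_comm, rootFactor]

variable [Fintype ι]

lemma gradientPairing_denominator {z : WeightAlgebra E} {G : ι → WeightAlgebra E}
    (h : ∀ i, diag (R.form (R.root i)) z = rootFactor (R.root i) * G i) :
    R.gradientPairing z R.denominator =
      R.denominator * (diag (R.form R.ρ) z + ∑ i, exp (-R.root i) * G i) := by
  rw [denominator, Derivation.leibniz, gradientPairing_exp,
    derivation_prod_eq_mul_sum _ fun i _ => R.gradientPairing_rootFactor (h i), smul_eq_mul,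
    smul_eq_mul]
  ring

variable {R}

/-- Compare the eigenvalues of the Laplacian on the two factors and on the product. -/
lemma freudenthal (hR : R.IsReduced) {lam : E} {F : WeightAlgebra E} {G : ι → WeightAlgebra E}
    (hF : ∀ v, F.coeff v ≠ 0 → R.form v v = R.form lam lam)
    (hDF : ∀ v, (R.denominator * F).coeff v ≠ 0 →
      R.form v v = R.form (lam + R.ρ) (lam + R.ρ))
    (hG : ∀ i, diag (R.form (R.root i)) F = rootFactor (R.root i) * G i) :
    R.form lam R.ρ • F = diag (R.form R.ρ) F + ∑ i, exp (-R.root i) * G i := by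
  have hmul := R.laplacian_mul R.denominator F
  simp only [laplacian, diag_eq_smul hF, diag_eq_smul hDF,
    diag_eq_smul fun v => form_self_of_coeff_denominator_ne_zero hR (v := v),
    gradientPairing_denominator R hG, form_add_self, add_smul, smul_mul_assoc, mul_smul_comm,
    mul_smul] at hmul
  refine mul_left_cancel₀ R.denominator_ne_zero (smul_right_injective _ (two_ne_zero' ℚ) ?_)
  rw [mul_smul_comm]
  linear_combination (exp := 1) hmul

end Freudenthal

section RootStrings

open WeightAlgebra

/-- The part of the `root i`-string below `μ` that stops just before the reflection of `μ`,
weighted so that `rootFactor_mul_rootString` holds; it is zero unless `coroot i μ` is positive. -/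
def rootString (i : ι) (μ : E) : WeightAlgebra E :=
  (R.form (R.root i) μ)⁺ • ∑ t ∈ Finset.range ⌊R.coroot i μ⌋₊, exp (μ - (t : ℚ) • R.root i)

lemma coeff_rootString_nonneg (i : ι) (μ v : E) : 0 ≤ (R.rootString i μ).coeff v := by
  classical
  rw [rootString, AddMonoidAlgebra.coeff_smul, Finsupp.smul_apply, AddMonoidAlgebra.coeff_sum,
    Finsupp.finsetSum_apply]
  refine smul_nonneg (posPart_nonneg _) (Finset.sum_nonneg fun t _ => ?_)
  rw [coeff_exp]
  split_ifs <;> norm_num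

lemma coeff_rootString_self_pos {i : ι} {μ : E} (h : 1 ≤ R.coroot i μ) :
    0 < (R.rootString i μ).coeff μ := by
  classical
  have hform : 0 < R.form (R.root i) μ := by
    rw [R.form_comm]
    exact R.coroot_pos_iff.1 (one_pos.trans_le h)
  rw [rootString, AddMonoidAlgebra.coeff_smul, Finsupp.smul_apply, AddMonoidAlgebra.coeff_sum,
    Finsupp.finsetSum_apply]
  refine smul_pos (posPart_pos hform) (Finset.sum_pos' (fun t _ => ?_)
    ⟨0, Finset.mem_range.2 (Nat.floor_pos.2 h), ?_⟩)
  · rw [coeff_exp]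
    split_ifs <;> norm_num
  · simp [coeff_exp]

lemma rootFactor_mul_rootString {i : ι} {μ : E} (h : ∃ z : ℤ, R.coroot i μ = z) :
    rootFactor (R.root i) * R.rootString i μ =
      (R.form (R.root i) μ)⁺ • (exp μ - exp (R.reflection i μ)) := by
  rcases le_or_gt (R.coroot i μ) 0 with hneg | hpos
  · have hform : R.form (R.root i) μ ≤ 0 := by
      rw [R.form_comm]
      exact not_lt.1 (R.coroot_pos_iff.not.1 (not_lt.2 hneg))
    rw [rootString, posPart_eq_zero.2 hform, zero_smul, zero_smul, mul_zero]
  · obtain ⟨z, hz⟩ := h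
    have hfloor : ((⌊R.coroot i μ⌋₊ : ℕ) : ℚ) = R.coroot i μ := by
      lift z to ℕ using by exact_mod_cast (hz ▸ hpos).le
      rw [hz, Int.cast_natCast, Nat.floor_natCast]
    have hstep (t : ℕ) : rootFactor (R.root i) * exp (μ - (t : ℚ) • R.root i) =
        exp (μ - (t : ℚ) • R.root i) - exp (μ - ((t + 1 : ℕ) : ℚ) • R.root i) := by
      rw [rootFactor_mul_exp, sub_sub, Nat.cast_succ, add_smul, one_smul]
    rw [rootString, mul_smul_comm, Finset.mul_sum, Finset.sum_congr rfl fun t _ => hstep t,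
      Finset.sum_range_sub' fun t : ℕ => exp (μ - (t : ℚ) • R.root i), hfloor, reflection_apply,
      Nat.cast_zero, zero_smul, sub_zero]

lemma form_root_reflection (i : ι) (v : E) :
    R.form (R.root i) (R.reflection i v) = -R.form (R.root i) v := by
  rw [← R.form_reflection i (R.root i) v, reflection_root_self, map_neg, LinearMap.neg_apply,
    neg_neg]

lemma diag_form_root_sum_exp {O : Finset E} {i : ι} (hO : ∀ μ ∈ O, R.reflection i μ ∈ O)
    (hint : ∀ μ ∈ O, ∃ z : ℤ, R.coroot i μ = z) :
    diag (R.form (R.root i)) (∑ μ ∈ O, exp μ) =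
      rootFactor (R.root i) * ∑ μ ∈ O, R.rootString i μ := by
  have hreindex : ∑ μ ∈ O, (R.form (R.root i) μ)⁺ • exp (R.reflection i μ) =
      ∑ μ ∈ O, (R.form (R.root i) μ)⁻ • exp μ := by
    refine Finset.sum_nbij' (R.reflection i) (R.reflection i) hO hO
      (fun μ _ => R.reflection_reflection i μ) (fun μ _ => R.reflection_reflection i μ)
      fun μ _ => ?_
    rw [form_root_reflection, negPart_neg]
  rw [Finset.mul_sum, Finset.sum_congr rfl fun μ hμ => R.rootFactor_mul_rootString (hint μ hμ)]
  simp only [smul_sub, Finset.sum_sub_distrib]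
  rw [hreindex, ← Finset.sum_sub_distrib, map_sum]
  refine Finset.sum_congr rfl fun μ _ => ?_
  rw [diag_exp, ← sub_smul, posPart_sub_negPart]

variable {R}

lemma sub_root_notMem_orbit [Finite ι] {i : ι} {μ v : E} (hμ : μ ∈ R.orbit v)
    (h : 1 < R.coroot i μ) : μ - R.root i ∉ R.orbit v := fun hmem => by
  have hnorm := (form_self_of_mem_orbit hmem).trans (form_self_of_mem_orbit hμ).symm
  simp only [map_sub, LinearMap.sub_apply, R.form_comm (R.root i) μ] at hnorm
  have hprod : (R.coroot i μ - 1) * R.form (R.root i) (R.root i) = 0 := by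
    linear_combination R.coroot_mul_form i μ - hnorm
  exact (mul_pos (sub_pos.2 h) (R.form_root_pos i)).ne' hprod

variable [Fintype ι]

/-- If `coroot i μ ≥ 2` then `μ - root i` is not a weight, but the right-hand side of `freudenthal`
has a positive coefficient there. -/
lemma coroot_le_one_of_denominator_mul_eq_alternant [Fintype R.W] (hR : R.IsReduced) {lam : E}
    (hlat : ∀ i, ∃ z : ℤ, R.coroot i lam = z)
    (h : R.denominator * ∑ μ ∈ R.orbit lam, exp μ = R.alternant (lam + R.ρ)) (i : ι) :
    R.coroot i lam ≤ 1 := by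
  classical
  have hcoeff (v : E) : (∑ μ ∈ R.orbit lam, exp μ).coeff v = if v ∈ R.orbit lam then 1 else 0 := by
    simp only [AddMonoidAlgebra.coeff_sum, Finsupp.finsetSum_apply, coeff_exp, Finset.sum_ite_eq']
  have hfreudenthal := freudenthal hR
    (fun v hv => form_self_of_mem_orbit (ite_ne_right_iff.1 (hcoeff v ▸ hv)).1)
    (fun v hv => form_self_of_coeff_alternant_ne_zero (h ▸ hv))
    fun i => R.diag_form_root_sum_exp (i := i)
      (fun μ hμ => map_mem_orbit (R.reflection_mem i) hμ)
      fun μ hμ => exists_coroot_eq_intCast_of_mem_orbit hlat hμ i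
  by_contra! hi
  have hzero := congrArg (fun x : WeightAlgebra E => x.coeff (lam - R.root i)) hfreudenthal
  simp only [AddMonoidAlgebra.coeff_smul, Finsupp.smul_apply, AddMonoidAlgebra.coeff_add,
    Finsupp.add_apply, coeff_diag, hcoeff,
    if_neg (sub_root_notMem_orbit self_mem_orbit hi), smul_zero, mul_zero, zero_add] at hzero
  simp only [AddMonoidAlgebra.coeff_sum, Finsupp.finsetSum_apply, coeff_exp_mul,
    sub_neg_eq_add] at hzero
  refine hzero.not_lt (Finset.sum_pos' (fun j _ => Finset.sum_nonneg fun μ _ =>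
    R.coeff_rootString_nonneg j μ _) ⟨i, Finset.mem_univ i, ?_⟩)
  rw [sub_add_cancel]
  exact Finset.sum_pos' (fun μ _ => R.coeff_rootString_nonneg i μ _)
    ⟨lam, self_mem_orbit, R.coeff_rootString_self_pos hi.le⟩

end RootStrings

section Multiplicities

open WeightAlgebra

variable [Fintype ι]

/-- The weight multiplicity given by Kostant's formula. -/
abbrev mult (lam μ : E) : ℚ := wtMult R.form R.root R.form_root_ne_zero lam μ

lemma mult_eq_sum [Fintype R.W] (lam μ : E) :
    R.mult lam μ = ∑ w : R.W, LinearMap.det (w : E →ₗ[ℚ] E) *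
      (kostant R.root ((w : E ≃ₗ[ℚ] E) (lam + R.ρ) - R.ρ - μ) : ℚ) := by
  rw [mult, wtMult, finsum_eq_sum_of_fintype]
  exact Finset.sum_congr rfl fun w _ => by rw [sub_right_comm]

lemma form_add_rho_root_pos {lam : E} (hdom : ∀ i, 0 ≤ R.coroot i lam) (i : ι) :
    0 < R.form (lam + R.ρ) (R.root i) := by
  rw [map_add, LinearMap.add_apply]
  exact add_pos_of_nonneg_of_pos (R.coroot_nonneg_iff.1 (hdom i)) (form_rho_root_pos i)

variable {R}

lemma map_eq_self_of_map_eq_add_sum {w : E ≃ₗ[ℚ] E} (hw : w ∈ R.W) {v : E}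
    (hv : ∀ i, 0 ≤ R.form v (R.root i)) {f : ι → ℕ} (h : w v = v + ∑ i, f i • R.root i) :
    w v = v := by
  have hpair : 0 ≤ R.form v (∑ i, f i • R.root i) := by
    simp only [map_sum, map_nsmul]
    exact Finset.sum_nonneg fun i _ => nsmul_nonneg (hv i) _
  have hnorm := form_map hw v v
  rw [h, form_add_self] at hnorm
  have hzero : ∑ i, f i • R.root i = 0 := R.eq_zero_of_form_self_nonpos (by linarith)
  rw [h, hzero, add_zero]

lemma mult_self {lam : E} (hdom : ∀ i, 0 ≤ R.coroot i lam) : R.mult lam lam = 1 := by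
  have := Fintype.ofFinite R.W
  have hpos := R.form_add_rho_root_pos hdom
  rw [mult_eq_sum, Finset.sum_eq_single (1 : R.W)]
  · change LinearMap.det LinearMap.id * (kostant R.root (lam + R.ρ - R.ρ - lam) : ℚ) = 1
    rw [add_sub_cancel_right, sub_self,
      kostant_zero (φ := R.functional.toAddMonoidHom) R.functional_root_pos, LinearMap.det_id,
      Nat.cast_one, mul_one]
  · refine fun w _ hw => mul_eq_zero_of_right _ (Nat.cast_eq_zero.2 ?_)
    by_contra h
    obtain ⟨f, hf⟩ := exists_eq_sum_of_kostant_ne_zero h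
    refine hw (Subtype.ext (eq_one_of_map_eq_self w.2 hpos ?_))
    refine map_eq_self_of_map_eq_add_sum w.2 (fun i => (hpos i).le) (f := f) ?_
    rw [hf]
    abel
  · exact fun h => absurd (Finset.mem_univ _) h

section FiniteSupport

variable {lam : E} {O : Finset E} (hO : ∀ μ, R.mult lam μ ≠ 0 → μ ∈ O)
include hO

lemma coeff_sum_mult_smul_exp (μ : E) :
    (∑ ν ∈ O, R.mult lam ν • exp ν).coeff μ = R.mult lam μ := by
  classical
  rw [coeff_sum_smul_exp, Finset.sum_ite_eq', ite_eq_left_iff]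
  exact fun hμ => (not_imp_comm.1 (hO μ) hμ).symm

lemma weyl_character_formula [Fintype R.W] :
    R.denominator * ∑ μ ∈ O, R.mult lam μ • exp μ = R.alternant (lam + R.ρ) := by
  rw [denominator, mul_assoc, prod_rootFactor_mul_eq_sum_exp
    (φ := R.functional.toAddMonoidHom) R.functional_root_pos
    (fun w : R.W => (w : E ≃ₗ[ℚ] E) (lam + R.ρ) - R.ρ) (fun w => LinearMap.det (w : E →ₗ[ℚ] E)) _
    fun μ => (coeff_sum_mult_smul_exp hO μ).trans (R.mult_eq_sum lam μ), Finset.mul_sum]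
  refine Finset.sum_congr rfl fun w _ => ?_
  rw [mul_smul_comm, ← exp_add, add_sub_cancel]

variable [FiniteDimensional ℚ E] (hdom : ∀ i, 0 ≤ R.coroot i lam)
include hdom

lemma isReduced_of_finite_mult : R.IsReduced := by
  have := Fintype.ofFinite R.W
  exact isReduced_of_denominator_mul_eq_alternant (R.form_add_rho_root_pos hdom)
    (weyl_character_formula hO)

lemma mult_reflection {i : ι} (hi : R.IsSimple i) (μ : E) :
    R.mult lam (R.reflection i μ) = R.mult lam μ := by
  have := Fintype.ofFinite R.W
  have hinvariant : act (R.reflection i) (∑ ν ∈ O, R.mult lam ν • exp ν) =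
      ∑ ν ∈ O, R.mult lam ν • exp ν := by
    have h := act_reflection_alternant (R := R) i (lam + R.ρ)
    rw [← weyl_character_formula hO, map_mul,
      act_denominator (isReduced_of_finite_mult hO hdom) hi, neg_mul, neg_inj] at h
    exact mul_left_cancel₀ R.denominator_ne_zero h
  rw [← coeff_sum_mult_smul_exp hO, ← coeff_sum_mult_smul_exp hO μ,
    ← coeff_act (R.reflection i) _ μ, hinvariant]

lemma mult_map {w : E ≃ₗ[ℚ] E} (hw : w ∈ R.W) (μ : E) : R.mult lam (w μ) = R.mult lam μ := by
  refine W_induction_simple (p := fun w => R.mult lam (w μ) = R.mult lam μ) rfl ?_ hw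
  intro i w hi ih
  rw [LinearEquiv.mul_apply, mult_reflection hO hdom hi, ih]

end FiniteSupport

section Minuscule

variable [FiniteDimensional ℚ E] {lam : E} (hdom : ∀ i, 0 ≤ R.coroot i lam)
  (hmin : ∀ μ, R.mult lam μ ≠ 0 → μ ∈ R.orbit lam)
include hdom hmin

lemma mult_eq_one_of_mem_orbit {μ : E} (hμ : μ ∈ R.orbit lam) : R.mult lam μ = 1 := by
  obtain ⟨w, hw, rfl⟩ := mem_orbit.1 hμ
  rw [mult_map hmin hdom hw, mult_self hdom]

lemma coroot_eq_zero_or_one (hlat : ∀ i, ∃ z : ℤ, R.coroot i lam = z) (i : ι) :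
    R.coroot i lam = 0 ∨ R.coroot i lam = 1 := by
  have := Fintype.ofFinite R.W
  have hle : R.coroot i lam ≤ 1 := by
    refine coroot_le_one_of_denominator_mul_eq_alternant (isReduced_of_finite_mult hmin hdom) hlat
      ?_ i
    rw [← weyl_character_formula hmin]
    congr 1
    refine Finset.sum_congr rfl fun μ hμ => ?_
    rw [mult_eq_one_of_mem_orbit hdom hmin hμ, one_smul]
  have hnonneg := hdom i
  obtain ⟨z, hz⟩ := hlat i
  rw [hz] at hnonneg hle ⊢
  norm_cast at hnonneg hle ⊢
  lia

end Minuscule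

end Multiplicities

section MinimalRepresentatives

/-- The condition that `u` inverts no positive root orthogonal to `v`. For dominant `v` it singles
out the element of minimal length in a coset of the stabilizer of `v`. -/
def IsMinimalRep (v : E) (u : E ≃ₗ[ℚ] E) : Prop := ∀ i, R.coroot i v = 0 → ¬R.IsInversion u i

variable {R}

section Fintype

variable [Fintype ι]

variable (R) in
lemma form_mul_reflection_rho (w : E ≃ₗ[ℚ] E) (i : ι) :
    R.form ((w * R.reflection i) R.ρ) R.ρ =
      R.form (w R.ρ) R.ρ - R.coroot i R.ρ * R.form (w (R.root i)) R.ρ := by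
  rw [LinearEquiv.mul_apply, reflection_apply, map_sub, map_smul, map_sub, map_smul,
    LinearMap.sub_apply, LinearMap.smul_apply, smul_eq_mul]

lemma form_mul_reflection_rho_lt {w : E ≃ₗ[ℚ] E} (hw : w ∈ R.W) {i : ι}
    (h : ¬R.IsInversion w i) :
    R.form ((w * R.reflection i) R.ρ) R.ρ < R.form (w R.ρ) R.ρ := by
  obtain ⟨j, hj⟩ := exists_map_root_of_not_isInversion hw h
  rw [form_mul_reflection_rho, hj, R.form_comm (R.root j)]
  exact sub_lt_self _ (mul_pos (coroot_rho_pos i) (form_rho_root_pos j))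

lemma lt_form_mul_reflection_rho {w : E ≃ₗ[ℚ] E} {i : ι} (h : R.IsInversion w i) :
    R.form (w R.ρ) R.ρ < R.form ((w * R.reflection i) R.ρ) R.ρ := by
  obtain ⟨j, hj⟩ := h
  rw [form_mul_reflection_rho, hj, map_neg, LinearMap.neg_apply, R.form_comm (R.root j), mul_neg,
    sub_neg_eq_add]
  exact lt_add_of_pos_right _ (mul_pos (coroot_rho_pos i) (form_rho_root_pos j))

lemma height_map_of_forall_isInversion {w : E ≃ₗ[ℚ] E} (hw : w ∈ R.W)
    (h : ∀ i, R.IsInversion w i) (v : E) : R.height (w v) = -R.height v := by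
  have huniv : R.inversions w = Finset.univ :=
    Finset.eq_univ_iff_forall.2 fun i => mem_inversions.2 (h i)
  have hsub := height_sub_height_map hw v
  rw [huniv, ← two_mul_height] at hsub
  linarith

lemma len_eq_height_sub_height {v : E} (h01 : ∀ i, R.coroot i v = 0 ∨ R.coroot i v = 1)
    {u : E ≃ₗ[ℚ] E} (hu : u ∈ R.W) (hmin : R.IsMinimalRep v u) :
    (len R.root u : ℚ) = R.height v - R.height (u v) := by
  rw [height_sub_height_map hu, len_eq_card_inversions, Finset.cast_card]
  refine Finset.sum_congr rfl fun i hi => ?_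
  exact ((h01 i).resolve_left fun h => hmin i h (mem_inversions.1 hi)).symm

end Fintype

variable [Finite ι]

variable (R) in
lemma exists_forall_isInversion : ∃ w ∈ R.W, ∀ i, R.IsInversion w i := by
  have := Fintype.ofFinite ι
  obtain ⟨w, hw⟩ := Finite.exists_min fun w : R.W => R.form ((w : E ≃ₗ[ℚ] E) R.ρ) R.ρ
  refine ⟨w, w.2, fun i => ?_⟩
  by_contra h
  exact (form_mul_reflection_rho_lt w.2 h).not_ge
    (hw ⟨w * R.reflection i, R.W.mul_mem w.2 (R.reflection_mem i)⟩)

lemma exists_isMinimalRep {v μ : E} (hμ : μ ∈ R.orbit v) :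
    ∃ u : R.W, (u : E ≃ₗ[ℚ] E) v = μ ∧ R.IsMinimalRep v u := by
  have := Fintype.ofFinite ι
  obtain ⟨w, hw, hwv⟩ := mem_orbit.1 hμ
  have : Nonempty {u : R.W // (u : E ≃ₗ[ℚ] E) v = μ} := ⟨⟨⟨w, hw⟩, hwv⟩⟩
  obtain ⟨⟨u, huv⟩, hmax⟩ := Finite.exists_max
    fun u : {u : R.W // (u : E ≃ₗ[ℚ] E) v = μ} => R.form ((u.1 : E ≃ₗ[ℚ] E) R.ρ) R.ρ
  refine ⟨u, huv, fun i hi hinv => ?_⟩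
  have hfix : R.reflection i v = v := by rw [reflection_apply, hi, zero_smul, sub_zero]
  refine (lt_form_mul_reflection_rho hinv).not_ge
    (hmax ⟨⟨u * R.reflection i, R.W.mul_mem u.2 (R.reflection_mem i)⟩, ?_⟩)
  rw [LinearEquiv.mul_apply, hfix, huv]

lemma len_mul_of_forall_isInversion {u x : E ≃ₗ[ℚ] E} (hu : u ∈ R.W) {σ : Equiv.Perm ι}
    (hσ : ∀ i, x (R.root i) = R.sign x i • R.root (σ i))
    (h : ∀ i, R.IsInversion x i → ¬R.IsInversion u (σ i)) :
    len R.root (u * x) = len R.root u + len R.root x := by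
  have := Fintype.ofFinite ι
  classical
  have hunion : R.inversions (u * x) =
      (R.inversions u).map σ.symm.toEmbedding ∪ R.inversions x := by
    ext i
    rw [Finset.mem_union, Finset.mem_map_equiv, Equiv.symm_symm, mem_inversions, mem_inversions,
      mem_inversions]
    by_cases hi : R.IsInversion x i
    · obtain ⟨j, hj⟩ := exists_map_root_of_not_isInversion hu (h i hi)
      refine iff_of_true ⟨j, ?_⟩ (Or.inr hi)
      rw [LinearEquiv.mul_apply, hσ, sign_eq_neg_one hi, neg_one_smul, map_neg, hj]
    · rw [or_iff_left hi, IsInversion, LinearEquiv.mul_apply, hσ, sign_eq_one hi, one_smul,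
        IsInversion]
  have hdisjoint : Disjoint ((R.inversions u).map σ.symm.toEmbedding) (R.inversions x) := by
    rw [Finset.disjoint_left]
    intro i hi hx
    rw [Finset.mem_map_equiv, Equiv.symm_symm] at hi
    exact h i (mem_inversions.1 hx) (mem_inversions.1 hi)
  rw [len_eq_card_inversions, len_eq_card_inversions, len_eq_card_inversions, hunion,
    Finset.card_union_of_disjoint hdisjoint, Finset.card_map]

lemma len_mul_of_map_eq_self {v : E} (hdom : ∀ i, 0 ≤ R.coroot i v) {u x : E ≃ₗ[ℚ] E}
    (hu : u ∈ R.W) (hmin : R.IsMinimalRep v u) (hx : x ∈ R.W) (hxv : x v = v) :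
    len R.root (u * x) = len R.root u + len R.root x := by
  obtain ⟨σ, hσ⟩ := exists_perm hx
  refine len_mul_of_forall_isInversion hu hσ fun i hi => hmin _ (le_antisymm ?_ (hdom _))
  have hcoroot := coroot_map hx (hσ i) v
  rw [hxv, sign_eq_neg_one hi, neg_one_mul] at hcoroot
  exact hcoroot.trans_le (neg_nonpos.2 (hdom i))

end MinimalRepresentatives

section PoincarePolynomial

variable [Finite ι]

/-- The Poincaré polynomial of the stabilizer of `v`. -/
abbrev poincare (v : E) : ℚ[X] := tpoly R.form R.root R.form_root_ne_zero v

open scoped Classical in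
lemma poincare_eq_sum [Fintype R.W] (v : E) :
    R.poincare v = ∑ w ∈ ({w | (w : E ≃ₗ[ℚ] E) v = v} : Finset R.W),
      X ^ len R.root (w : E ≃ₗ[ℚ] E) := by
  rw [poincare, tpoly, finsum_mem_eq_finite_toFinset_sum _ (Set.toFinite _)]
  exact Finset.sum_congr (by ext w; simp) fun _ _ => rfl

variable {R}

/-- Every element of the Weyl group is uniquely a minimal coset representative times an element of
the stabilizer, and lengths add. -/
lemma poincare_zero_eq_mul {v : E} (hdom : ∀ i, 0 ≤ R.coroot i v) {U : E → R.W}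
    (hU : ∀ μ ∈ R.orbit v, (U μ : E ≃ₗ[ℚ] E) v = μ)
    (hmin : ∀ μ ∈ R.orbit v, R.IsMinimalRep v (U μ)) :
    R.poincare 0 =
      (∑ μ ∈ R.orbit v, X ^ len R.root (U μ : E ≃ₗ[ℚ] E)) * R.poincare v := by
  classical
  have := Fintype.ofFinite R.W
  have hmem (w : R.W) : (w : E ≃ₗ[ℚ] E) v ∈ R.orbit v := mem_orbit.2 ⟨w, w.2, rfl⟩
  rw [poincare_eq_sum, poincare_eq_sum, Finset.sum_mul_sum, ← Finset.sum_product']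
  symm
  refine Finset.sum_bij' (fun p _ => U p.1 * p.2)
    (fun w _ => ((w : E ≃ₗ[ℚ] E) v, (U ((w : E ≃ₗ[ℚ] E) v))⁻¹ * w))
    (fun p _ => Finset.mem_filter.2 ⟨Finset.mem_univ _, map_zero _⟩) (fun w _ => ?_) ?_
    (fun w _ => mul_inv_cancel_left _ _) ?_
  · refine Finset.mk_mem_product (hmem w) (Finset.mem_filter.2 ⟨Finset.mem_univ _, ?_⟩)
    exact ((U ((w : E ≃ₗ[ℚ] E) v) : E ≃ₗ[ℚ] E).symm_apply_eq).2 (hU _ (hmem w)).symm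
  · rintro ⟨μ, x⟩ hp
    obtain ⟨hμ, hx⟩ := Finset.mem_product.1 hp
    have hv : ((U μ * x : R.W) : E ≃ₗ[ℚ] E) v = μ := by
      rw [Subgroup.coe_mul, LinearEquiv.mul_apply, (Finset.mem_filter.1 hx).2, hU μ hμ]
    simp only [hv, inv_mul_cancel_left]
  · rintro ⟨μ, x⟩ hp
    obtain ⟨hμ, hx⟩ := Finset.mem_product.1 hp
    rw [← pow_add, Subgroup.coe_mul, len_mul_of_map_eq_self hdom (U μ).2 (hmin μ hμ) x.2
      (Finset.mem_filter.1 hx).2]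

end PoincarePolynomial

section DynkinPolynomial

variable [Fintype ι] {R}

lemma eq_sum_X_pow_of_coeff {lam : E} {DP : ℚ[X]} {O : Finset E} {e : E → ℕ}
    (hDP : ∀ n : ℕ, DP.coeff n = ∑ᶠ μ ∈ {μ : E | R.height (lam + μ) = n}, R.mult lam μ)
    (hO : ∀ μ, R.mult lam μ ≠ 0 → μ ∈ O) (hone : ∀ μ ∈ O, R.mult lam μ = 1)
    (he : ∀ μ ∈ O, R.height (lam + μ) = e μ) : DP = ∑ μ ∈ O, X ^ e μ := by
  classical
  ext n
  have hinter : {μ | R.height (lam + μ) = n} ∩ Function.support (R.mult lam) =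
      ↑{μ ∈ O | e μ = n} ∩ Function.support (R.mult lam) := by
    ext μ
    rw [Set.mem_inter_iff, Set.mem_inter_iff, Finset.mem_coe, Finset.mem_filter]
    refine and_congr_left fun hμ => ?_
    rw [and_iff_right (hO μ hμ), Set.mem_ofPred_eq, he μ (hO μ hμ), Nat.cast_inj]
  rw [hDP, finsum_mem_eq_sum_of_inter_support_eq _ hinter, Finset.sum_filter,
    Polynomial.finsetSum_coeff]
  refine Finset.sum_congr rfl fun μ hμ => ?_
  rw [Polynomial.coeff_X_pow, hone μ hμ]
  simp only [eq_comm]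

/-- The longest element turns `height (lam + μ)` into the length of the minimal representative of
the weight `w₀ μ`. -/
lemma dynkin_eq_sum_X_pow_len [FiniteDimensional ℚ E] {lam : E}
    (hdom : ∀ i, 0 ≤ R.coroot i lam) (hlat : ∀ i, ∃ z : ℤ, R.coroot i lam = z)
    (hmin : ∀ μ, R.mult lam μ ≠ 0 → μ ∈ R.orbit lam) {DP : ℚ[X]}
    (hDP : ∀ n : ℕ, DP.coeff n = ∑ᶠ μ ∈ {μ : E | R.height (lam + μ) = n}, R.mult lam μ)
    {U : E → R.W} (hU : ∀ μ ∈ R.orbit lam, (U μ : E ≃ₗ[ℚ] E) lam = μ)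
    (hUmin : ∀ μ ∈ R.orbit lam, R.IsMinimalRep lam (U μ)) :
    DP = ∑ μ ∈ R.orbit lam, X ^ len R.root (U μ : E ≃ₗ[ℚ] E) := by
  obtain ⟨w₀, hw₀, hinv⟩ := R.exists_forall_isInversion
  have hheight (μ : E) (hμ : μ ∈ R.orbit lam) :
      R.height (lam + μ) = len R.root (U (w₀ μ) : E ≃ₗ[ℚ] E) := by
    have hw₀μ := map_mem_orbit hw₀ hμ
    rw [len_eq_height_sub_height (coroot_eq_zero_or_one hdom hmin hlat) (U _).2 (hUmin _ hw₀μ),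
      hU _ hw₀μ, height_map_of_forall_isInversion hw₀ hinv, sub_neg_eq_add, map_add]
  rw [eq_sum_X_pow_of_coeff hDP hmin (fun μ => mult_eq_one_of_mem_orbit hdom hmin) hheight]
  exact Finset.sum_nbij' w₀ (w₀⁻¹ : E ≃ₗ[ℚ] E) (fun μ => map_mem_orbit hw₀)
    (fun μ => map_mem_orbit (R.W.inv_mem hw₀)) (fun μ _ => w₀.symm_apply_apply μ)
    (fun μ _ => w₀.apply_symm_apply μ) fun μ _ => rfl

end DynkinPolynomial

end PositiveRootSystem

theorem dynkin_polynomial_of_minuscule_general {E ι : Type} [AddCommGroup E] [Module ℚ E]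
    [FiniteDimensional ℚ E] [Fintype ι] (R : PositiveRootSystem E ι) {lam : E}
    (hdom : ∀ i, 0 ≤ R.coroot i lam) (hlat : ∀ i, ∃ z : ℤ, R.coroot i lam = z)
    (hmin : ∀ μ, R.mult lam μ ≠ 0 → μ ∈ R.orbit lam) {DP : ℚ[X]}
    (hDP : ∀ n : ℕ, DP.coeff n = ∑ᶠ μ ∈ {μ : E | R.height (lam + μ) = n}, R.mult lam μ)
    {d dl : Fin (finrank ℚ E) → ℕ}
    (hd : R.poincare 0 * (1 - X) ^ finrank ℚ E = ∏ i, (1 - X ^ d i))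
    (hdl : R.poincare lam * (1 - X) ^ finrank ℚ E = ∏ i, (1 - X ^ dl i)) :
    DP * R.poincare lam = R.poincare 0 ∧ DP * ∏ i, (1 - X ^ dl i) = ∏ i, (1 - X ^ d i) := by
  choose! U hU hUmin using fun μ (hμ : μ ∈ R.orbit lam) =>
    PositiveRootSystem.exists_isMinimalRep hμ
  have hquot : DP * R.poincare lam = R.poincare 0 := by
    rw [PositiveRootSystem.poincare_zero_eq_mul hdom hU hUmin,
      PositiveRootSystem.dynkin_eq_sum_X_pow_len hdom hlat hmin hDP hU hUmin]
  exact ⟨hquot, by rw [← hdl, ← hd, ← hquot, mul_assoc]⟩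

theorem dynkin_polynomial_of_minuscule
    (E : Type) [AddCommGroup E] [Module ℚ E] [FiniteDimensional ℚ E]
    (ι : Type) [Fintype ι]
    (B : E →ₗ[ℚ] E →ₗ[ℚ] ℚ)
    (hsym : ∀ x y : E, B x y = B y x)
    (hpos : ∀ v : E, v ≠ 0 → 0 < B v v)
    (α : ι → E) (hα : ∀ i, α i ≠ 0) (hainj : Function.Injective α)
    (hne : ∀ i, B (α i) (α i) ≠ 0)
    (hspan : Submodule.span ℚ (Set.range α) = ⊤)
    (hint : ∀ i j, ∃ z : ℤ, cpair B (α i) (α j) = (z : ℚ))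
    (hperm : ∀ i j, (∃ l, refl B (α i) (hne i) (α j) = α l) ∨
      (∃ l, refl B (α i) (hne i) (α j) = - α l))
    (hhalf : ∃ φ : E →ₗ[ℚ] ℚ, ∀ i, 0 < φ (α i))
    (hWfin : Finite (weylGroup B α hne))
    -- λ is a dominant integral weight
    (lam : E) (hdom : IsDominant B α lam)
    (hlat : ∀ i, ∃ z : ℤ, cpair B (α i) lam = (z : ℚ))
    -- λ is minuscule: every weight of V_λ lies in Wλ
    (hmin : ∀ mu : E, wtMult B α hne lam mu ≠ 0 →
      ∃ w : weylGroup B α hne, (w : E ≃ₗ[ℚ] E) lam = mu)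
    -- DP is the Dynkin polynomial D_λ(q) = Σ_μ m_λ^μ q^{ht(λ+μ)}
    (DP : Polynomial ℚ)
    (hDP : ∀ n : ℕ, DP.coeff n =
      ∑ᶠ mu ∈ {mu : E | htq B α (lam + mu) = (n : ℚ)}, wtMult B α hne lam mu)
    -- d and dλ are the degrees of the basic invariants of W and of the
    -- stabilizer W_λ, characterized by Solomon's formula t_μ(q) = ∏ (1−q^{d_i(W_μ)})/(1−q)
    (l : ℕ) (hl : l = finrank ℚ E)
    (d dl : Fin l → ℕ)
    (hd : tpoly B α hne 0 * (1 - (X : Polynomial ℚ)) ^ l =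
      ∏ i, (1 - (X : Polynomial ℚ) ^ (d i)))
    (hdl : tpoly B α hne lam * (1 - (X : Polynomial ℚ)) ^ l =
      ∏ i, (1 - (X : Polynomial ℚ) ^ (dl i))) :
    -- D_λ(q) t_λ(q) = t_0(q), i.e. D_λ(q) = t_0(q)/t_λ(q), and
    -- D_λ(q) ∏ (1−q^{d_i(W_λ)}) = ∏ (1−q^{d_i})
    DP * tpoly B α hne lam = tpoly B α hne 0 ∧
    DP * ∏ i, (1 - (X : Polynomial ℚ) ^ (dl i)) =
      ∏ i, (1 - (X : Polynomial ℚ) ^ (d i)) := by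
  subst hl
  obtain ⟨φ, hφ⟩ := hhalf
  let R : PositiveRootSystem E ι := ⟨B, hsym, hpos, α, hainj, hperm, hint, φ, hφ⟩
  have horbit (μ : E) (hμ : R.mult lam μ ≠ 0) : μ ∈ R.orbit lam :=
    let ⟨w, hw⟩ := hmin μ hμ
    PositiveRootSystem.mem_orbit.2 ⟨w, w.2, hw⟩
  exact dynkin_polynomial_of_minuscule_general R hdom hlat horbit hDP hd hdl
end
end
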